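/- Let p, q ≥ 1, let A_1,…,A_p, B_1,…,B_q be strictly positive and a_1,…,a_p, b_1,…,b_q be nonnegative reals with Σ_{i=1}^p A_i = Σ_{j=1}^q B_j, μ = Σ_{j=1}^q b_j − Σ_{k=1}^p a_k + (p−q)/2 > 0, and ρ = ∏_{k=1}^p A_k^{A_k} · ∏_{j=1}^q B_j^{−B_j} ≤ 1. Set γ = −min_{1≤k≤p}(a_k/A_k); for c > γ and 0 < x < ρ define H(x) = lim_{R→∞} (1/(2π)) ∫_{−R}^{R} [∏_{k=1}^p Γ(A_k(c+it)+a_k) / ∏_{j=1}^q Γ(B_j(c+it)+b_j)] · x^{−(c+it)} dt (a real number independent of c), and let Q(u) = Σ_{i=1}^p u^{a_i/A_i}/(1 − u^{1/A_i}) − Σ_{j=1}^q u^{b_j/B_j}/(1 − u^{1/B_j}) for u ∈ (0,1). Then for every x ∈ (0,ρ): H(x) = (1/log(ρ/x)) · ∫_{x/ρ}^{1} H(x/u) · Q(u)/u du. -/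

import Mathlib

open MeasureTheory Filter

/-!
Write `x = ρ e^(-w)`. Binet's integral for the digamma function, together with `∑ A = ∑ B`, shows
that the logarithmic derivative of the quotient of Gamma products times `ρ^(-s)` is minus the
Laplace transform of `v ↦ Q (e^(-v))`. If `k` is a nonzero solution of the Volterra equation
`w k(w) = ∫ v in 0..w, k(v) Q(e^(v - w))`, its Laplace transform satisfies the same first order
equation, and is therefore a constant multiple of that quotient. Laplace inversion then makes
`w ↦ H (ρ e^(-w))` proportional to `k`, so that it solves the Volterra equation as well, and the
substitution `u = (x / ρ) e^v` turns this equation into the asserted formula.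

The integral defining `H` need not converge absolutely, so the inversion and the shift of the
contour into the half-plane of the Laplace transform are carried out with an additional Gaussian
factor `exp (((s - c) / T) ^ 2)`, and `T → ∞` at the end.
-/

open Set Topology

section DigammaKernel

/-- The function `1 / (1 - e⁻ᵗ) - 1 / t` of Binet's integral for the digamma function
`ψ y = log y - ∫ t in (0, ∞), e^(-ty) (1 / (1 - e⁻ᵗ) - 1 / t)`. -/
noncomputable def binetKernel (t : ℝ) : ℝ := 1 / (1 - Real.exp (-t)) - 1 / t

/-- The kernel of the Laplace transform `ψ (y + a) - log y`, where `ψ` is the digamma function. -/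
noncomputable def digammaKernel (a t : ℝ) : ℝ := 1 / t - Real.exp (-(t * a)) / (1 - Real.exp (-t))

lemma one_sub_exp_neg_pos {t : ℝ} (ht : 0 < t) : 0 < 1 - Real.exp (-t) :=
  sub_pos.2 (Real.exp_lt_one_iff.2 (neg_neg_of_pos ht))

lemma self_sub_sq_le_one_sub_exp_neg {x : ℝ} (hx : 0 ≤ x) : x - x ^ 2 ≤ 1 - Real.exp (-x) := by
  have h1 : Real.exp (-x) ≤ (1 + x)⁻¹ := by
    rw [Real.exp_neg]
    exact inv_anti₀ (by positivity) (by linarith [Real.add_one_le_exp x])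
  have h2 : (1 + x)⁻¹ ≤ 1 - x + x ^ 2 := by
    rw [inv_le_iff_one_le_mul₀ (by positivity)]
    nlinarith [pow_nonneg hx 3]
  linarith

lemma one_half_le_binetKernel {t : ℝ} (ht : 0 < t) : 1 / 2 ≤ binetKernel t := by
  have hD := one_sub_exp_neg_pos ht
  have hlog : 2 * (Real.exp t - 1) / (Real.exp t - 1 + 2) ≤ Real.log (1 + (Real.exp t - 1)) :=
    Real.le_log_one_add_of_nonneg (by linarith [Real.add_one_le_exp t])
  rw [add_sub_cancel, Real.log_exp, div_le_iff₀ (by linarith [Real.add_one_le_exp t])] at hlog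
  have hexp : Real.exp t * Real.exp (-t) = 1 := by rw [← Real.exp_add]; simp
  have key : (1 - Real.exp (-t)) * (2 + t) ≤ 2 * t := by
    nlinarith [mul_le_mul_of_nonneg_right hlog (Real.exp_pos (-t)).le]
  rw [binetKernel, div_sub_div _ _ hD.ne' ht.ne', div_le_div_iff₀ two_pos (by positivity)]
  linarith

lemma binetKernel_le_one {t : ℝ} (ht : 0 < t) : binetKernel t ≤ 1 := by
  have hD := one_sub_exp_neg_pos ht
  have hexp : Real.exp t * Real.exp (-t) = 1 := by rw [← Real.exp_add]; simp
  have key : Real.exp (-t) * (t + 1) ≤ 1 := by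
    nlinarith [mul_le_mul_of_nonneg_right (Real.add_one_le_exp t) (Real.exp_pos (-t)).le]
  rw [binetKernel, div_sub_div _ _ hD.ne' ht.ne', div_le_one (by positivity)]
  linarith

lemma binetKernel_le_one_half_add {t : ℝ} (ht : 0 < t) : binetKernel t ≤ 1 / 2 + t / 2 := by
  have hD := one_sub_exp_neg_pos ht
  have hexp : Real.exp t * Real.exp (-t) = 1 := by rw [← Real.exp_add]; simp
  have key : Real.exp (-t) * (2 + t + t ^ 2) ≤ 2 - t + t ^ 2 := by
    have h1 : Real.exp (-t) * (1 + t + t ^ 2 / 2) ≤ 1 := by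
      nlinarith [mul_le_mul_of_nonneg_right (Real.quadratic_le_exp_of_nonneg ht.le)
        (Real.exp_pos (-t)).le]
    have h2 : 0 ≤ 2 - t + t ^ 2 := by nlinarith [sq_nonneg (t - 1)]
    have h3 : 2 + t + t ^ 2 ≤ (1 + t + t ^ 2 / 2) * (2 - t + t ^ 2) := by
      nlinarith [pow_pos ht 3, pow_pos ht 4]
    nlinarith [mul_le_mul_of_nonneg_right h1 h2,
      mul_le_mul_of_nonneg_left h3 (Real.exp_pos (-t)).le]
  rw [binetKernel, div_sub_div _ _ hD.ne' ht.ne', div_le_iff₀ (by positivity)]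
  linarith

lemma abs_binetKernel_le_one {t : ℝ} (ht : 0 < t) : |binetKernel t| ≤ 1 :=
  abs_le.2 ⟨by linarith [one_half_le_binetKernel ht], binetKernel_le_one ht⟩

lemma continuousOn_binetKernel : ContinuousOn binetKernel (Ioi 0) := by
  unfold binetKernel
  fun_prop (disch := intro t ht; first | exact (one_sub_exp_neg_pos ht).ne' | exact ne_of_gt ht)

lemma continuousOn_digammaKernel (a : ℝ) : ContinuousOn (digammaKernel a) (Ioi 0) := by
  unfold digammaKernel
  fun_prop (disch := intro t ht; first | exact (one_sub_exp_neg_pos ht).ne' | exact ne_of_gt ht)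

lemma digammaKernel_eq (a t : ℝ) :
    digammaKernel a t =
      (1 - Real.exp (-(t * a))) / t - Real.exp (-(t * a)) * binetKernel t := by
  rw [digammaKernel, binetKernel]
  ring

variable {a t : ℝ}

lemma one_sub_exp_neg_mul_div_le (ht : 0 < t) : (1 - Real.exp (-(t * a))) / t ≤ a := by
  rw [div_le_iff₀ ht]
  linarith [Real.one_sub_le_exp_neg (t * a)]

lemma one_sub_exp_neg_mul_div_nonneg (ha : 0 ≤ a) (ht : 0 < t) :
    0 ≤ (1 - Real.exp (-(t * a))) / t :=
  div_nonneg (sub_nonneg.2 (Real.exp_le_one_iff.2 (by linarith [mul_nonneg ht.le ha]))) ht.le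

lemma abs_digammaKernel_le (ha : 0 ≤ a) (ht : 0 < t) : |digammaKernel a t| ≤ a + 1 := by
  have hE : Real.exp (-(t * a)) ≤ 1 := Real.exp_le_one_iff.2 (by linarith [mul_nonneg ht.le ha])
  have hg : |Real.exp (-(t * a)) * binetKernel t| ≤ 1 := by
    rw [abs_mul, Real.abs_exp]
    exact mul_le_one₀ hE (abs_nonneg _) (abs_binetKernel_le_one ht)
  rw [digammaKernel_eq]
  refine (abs_sub _ _).trans (add_le_add ?_ hg)
  rw [abs_of_nonneg (one_sub_exp_neg_mul_div_nonneg ha ht)]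
  exact one_sub_exp_neg_mul_div_le ht

lemma abs_digammaKernel_sub_le (ha : 0 ≤ a) (ht : 0 < t) :
    |digammaKernel a t - (a - 1 / 2)| ≤ (a ^ 2 + a + 1 / 2) * t := by
  have hta : 0 ≤ t * a := mul_nonneg ht.le ha
  have h1 : a - a ^ 2 * t ≤ (1 - Real.exp (-(t * a))) / t := by
    rw [le_div_iff₀ ht]
    linarith [self_sub_sq_le_one_sub_exp_neg hta]
  have h2 : (1 - Real.exp (-(t * a))) * binetKernel t ≤ t * a :=
    (mul_le_of_le_one_right (sub_nonneg.2 (Real.exp_le_one_iff.2 (neg_nonpos.2 hta)))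
      (binetKernel_le_one ht)).trans (by linarith [Real.one_sub_le_exp_neg (t * a)])
  have h3 : 0 ≤ (1 - Real.exp (-(t * a))) * binetKernel t :=
    mul_nonneg (sub_nonneg.2 (Real.exp_le_one_iff.2 (neg_nonpos.2 hta)))
      (by linarith [one_half_le_binetKernel ht])
  rw [digammaKernel_eq, abs_le]
  constructor <;>
  nlinarith [one_sub_exp_neg_mul_div_le (a := a) ht, one_half_le_binetKernel ht,
    binetKernel_le_one_half_add ht, mul_nonneg (sq_nonneg a) ht.le]

end DigammaKernel

section ExpIntegral

variable {f : ℝ → ℝ} {y M : ℝ}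

lemma integrableOn_exp_neg_mul_of_bounded (hy : 0 < y)
    (hf : AEStronglyMeasurable f (volume.restrict (Ioi 0))) (hM : ∀ t, 0 < t → |f t| ≤ M) :
    IntegrableOn (fun t => Real.exp (-(t * y)) * f t) (Ioi 0) := by
  refine ((exp_neg_integrableOn_Ioi 0 hy).congr_fun (fun t _ => ?_) measurableSet_Ioi).mul_bdd hf
    (ae_restrict_of_forall_mem measurableSet_Ioi hM)
  rw [neg_mul, mul_comm]

lemma abs_integral_exp_neg_mul_le (hy : 0 < y) (hM : ∀ t, 0 < t → |f t| ≤ M) :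
    |∫ t in Ioi (0 : ℝ), Real.exp (-(t * y)) * f t| ≤ M / y := by
  have hbound := norm_integral_le_of_norm_le (f := fun t => Real.exp (-(t * y)) * f t)
    ((exp_neg_integrableOn_Ioi 0 hy).mul_const M)
    (ae_restrict_of_forall_mem measurableSet_Ioi fun t ht => by
      rw [norm_mul, Real.norm_eq_abs, Real.norm_eq_abs, Real.abs_exp, mul_comm t, ← neg_mul]
      exact mul_le_mul_of_nonneg_left (hM t ht) (Real.exp_pos _).le)
  rw [integral_mul_const, integral_exp_mul_Ioi (neg_neg_of_pos hy)] at hbound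
  simpa [div_eq_inv_mul] using hbound

variable {a : ℝ}

lemma integrableOn_exp_neg_mul_one_sub_exp_div (hy : 0 < y) (ha : 0 ≤ a) :
    IntegrableOn (fun t => Real.exp (-(t * y)) * ((1 - Real.exp (-(t * a))) / t)) (Ioi 0) :=
  integrableOn_exp_neg_mul_of_bounded hy (Measurable.aestronglyMeasurable (by fun_prop))
    fun t ht => by
    rw [abs_of_nonneg (one_sub_exp_neg_mul_div_nonneg ha ht)]
    exact one_sub_exp_neg_mul_div_le ht

lemma integral_exp_neg_mul_one_sub_exp_div (hy : 0 < y) (ha : 0 ≤ a) :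
    ∫ t in Ioi (0 : ℝ), Real.exp (-(t * y)) * ((1 - Real.exp (-(t * a))) / t) =
      Real.log (y + a) - Real.log y := by
  have hint (t : ℝ) : t⁻¹ • (Real.exp (-(y * t)) - Real.exp (-((y + a) * t))) =
      Real.exp (-(t * y)) * ((1 - Real.exp (-(t * a))) / t) := by
    rw [show -((y + a) * t) = -(t * y) + -(t * a) by ring, Real.exp_add, mul_comm y t, smul_eq_mul]
    ring
  have hfrullani := Frullani.integral_Ioi_eq (f := fun x : ℝ => Real.exp (-x)) (b := y + a)
    (Continuous.locallyIntegrable (by fun_prop) |>.locallyIntegrableOn _) hy (by positivity)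
    (((by fun_prop : Continuous fun x : ℝ => Real.exp (-x)).tendsto' 0 1 (by simp)).mono_left
      nhdsWithin_le_nhds)
    Real.tendsto_exp_neg_atTop_nhds_zero
    (by simpa only [hint] using integrableOn_exp_neg_mul_one_sub_exp_div hy ha)
  simp only [hint] at hfrullani
  rw [hfrullani, sub_zero, smul_eq_mul, mul_one, Real.log_div (by positivity) hy.ne']

end ExpIntegral

section Digamma

variable {a y : ℝ}

lemma integrableOn_exp_neg_mul_binetKernel (hy : 0 < y) :
    IntegrableOn (fun t => Real.exp (-(t * y)) * binetKernel t) (Ioi 0) :=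
  integrableOn_exp_neg_mul_of_bounded hy
    (continuousOn_binetKernel.aestronglyMeasurable measurableSet_Ioi)
    fun _ ht => abs_binetKernel_le_one ht

lemma integral_exp_neg_mul_binetKernel_add_one (hy : 0 < y) :
    ∫ t in Ioi (0 : ℝ), Real.exp (-(t * (y + 1))) * binetKernel t =
      (∫ t in Ioi (0 : ℝ), Real.exp (-(t * y)) * binetKernel t)
        + (Real.log (y + 1) - Real.log y) - 1 / y := by
  have hexp : ∫ t in Ioi (0 : ℝ), Real.exp (-(t * y)) = 1 / y := by
    simp_rw [mul_comm _ y, ← neg_mul]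
    rw [integral_exp_mul_Ioi (neg_neg_of_pos hy)]
    simp
  have hexp_int : IntegrableOn (fun t : ℝ => Real.exp (-(t * y))) (Ioi 0) := by
    simpa only [mul_comm _ y, ← neg_mul] using exp_neg_integrableOn_Ioi 0 hy
  have hpoint : EqOn (fun t => Real.exp (-(t * (y + 1))) * binetKernel t)
      (fun t => Real.exp (-(t * y)) * binetKernel t
        + Real.exp (-(t * y)) * ((1 - Real.exp (-(t * 1))) / t) - Real.exp (-(t * y))) (Ioi 0) := by
    intro t (ht : 0 < t)
    have hD := (one_sub_exp_neg_pos ht).ne'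
    simp only [binetKernel, mul_one, mul_add, neg_add, Real.exp_add]
    field_simp
    ring
  have hbinet := integrableOn_exp_neg_mul_binetKernel hy
  have hfrullani := integrableOn_exp_neg_mul_one_sub_exp_div hy zero_le_one
  rw [setIntegral_congr_fun measurableSet_Ioi hpoint,
    integral_sub (hbinet.fun_add hfrullani) hexp_int, integral_add hbinet hfrullani,
    integral_exp_neg_mul_one_sub_exp_div hy zero_le_one, hexp]

lemma differentiableAt_log_Gamma (hy : 0 < y) :
    DifferentiableAt ℝ (Real.log ∘ Real.Gamma) y :=
  (Real.differentiableAt_Gamma fun m => by linarith [m.cast_nonneg (α := ℝ)]).log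
    (Real.Gamma_pos_of_pos hy).ne'

lemma log_Gamma_add_one (hy : 0 < y) :
    (Real.log ∘ Real.Gamma) (y + 1) = (Real.log ∘ Real.Gamma) y + Real.log y := by
  simp only [Function.comp_apply, Real.Gamma_add_one hy.ne',
    Real.log_mul hy.ne' (Real.Gamma_pos_of_pos hy).ne', add_comm]

lemma deriv_log_Gamma_add_one (hy : 0 < y) :
    deriv (Real.log ∘ Real.Gamma) (y + 1) = deriv (Real.log ∘ Real.Gamma) y + 1 / y := by
  rw [← deriv_comp_add_const, one_div, ← Real.deriv_log,
    ← deriv_add (differentiableAt_log_Gamma hy) (Real.differentiableAt_log hy.ne')]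
  refine EventuallyEq.deriv_eq ?_
  filter_upwards [eventually_gt_nhds hy] with x hx using log_Gamma_add_one hx

lemma abs_deriv_log_Gamma_sub_log_le (hy : 0 < y) :
    |deriv (Real.log ∘ Real.Gamma) y - Real.log y| ≤ 1 / y := by
  have hslope : slope (Real.log ∘ Real.Gamma) y (y + 1) = Real.log y := by
    rw [slope_def_field, log_Gamma_add_one hy]
    simp
  have hle : deriv (Real.log ∘ Real.Gamma) y ≤ Real.log y :=
    hslope ▸ Real.convexOn_log_Gamma.deriv_le_slope hy (mem_Ioi.2 (by positivity))
      (lt_add_one y) (differentiableAt_log_Gamma hy)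
  have hge : Real.log y ≤ deriv (Real.log ∘ Real.Gamma) (y + 1) :=
    hslope ▸ Real.convexOn_log_Gamma.slope_le_deriv hy (mem_Ioi.2 (by positivity))
      (lt_add_one y) (differentiableAt_log_Gamma (by positivity))
  rw [deriv_log_Gamma_add_one hy] at hge
  rw [abs_le]
  constructor <;> linarith [one_div_pos.2 hy]

lemma eq_zero_of_add_one_eq_of_abs_le_div {D : ℝ → ℝ} {C : ℝ}
    (hD : ∀ y, 0 < y → D (y + 1) = D y) (hC : ∀ y, 0 < y → |D y| ≤ C / y) (hy : 0 < y) :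
    D y = 0 := by
  have hnat (n : ℕ) : D (y + n) = D y := by
    induction n with
    | zero => simp
    | succ n ih => rw [Nat.cast_succ, ← add_assoc, hD _ (by positivity), ih]
  have hlim : Tendsto (fun n : ℕ => C / (y + n)) atTop (𝓝 0) :=
    tendsto_const_nhds.div_atTop (tendsto_atTop_add_const_left _ _ tendsto_natCast_atTop_atTop)
  refine abs_nonpos_iff.1 (ge_of_tendsto' hlim fun n => ?_)
  rw [← hnat n]
  exact hC _ (by positivity)

theorem hasDerivAt_log_Gamma (hy : 0 < y) :
    HasDerivAt (fun x => Real.log (Real.Gamma x))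
      (Real.log y - ∫ t in Ioi (0 : ℝ), Real.exp (-(t * y)) * binetKernel t) y := by
  have hdiff : deriv (Real.log ∘ Real.Gamma) y -
      (Real.log y - ∫ t in Ioi (0 : ℝ), Real.exp (-(t * y)) * binetKernel t) = 0 := by
    refine eq_zero_of_add_one_eq_of_abs_le_div (C := 2) (D := fun y =>
      deriv (Real.log ∘ Real.Gamma) y -
        (Real.log y - ∫ t in Ioi (0 : ℝ), Real.exp (-(t * y)) * binetKernel t))
      (fun y hy => ?_) (fun y hy => ?_) hy
    · simp only [deriv_log_Gamma_add_one hy, integral_exp_neg_mul_binetKernel_add_one hy]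
      ring
    · rw [← sub_add, show (2 : ℝ) / y = 1 / y + 1 / y by ring]
      exact (abs_add_le _ _).trans (add_le_add (abs_deriv_log_Gamma_sub_log_le hy)
        (abs_integral_exp_neg_mul_le hy fun t ht => abs_binetKernel_le_one ht))
  rw [← sub_eq_zero.1 hdiff]
  exact (differentiableAt_log_Gamma hy).hasDerivAt

theorem hasDerivAt_log_Gamma_add (ha : 0 ≤ a) (hy : 0 < y) :
    HasDerivAt (fun x => Real.log (Real.Gamma x))
      (Real.log y + ∫ t in Ioi (0 : ℝ), Real.exp (-(t * y)) * digammaKernel a t) (y + a) := by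
  convert hasDerivAt_log_Gamma (add_pos_of_pos_of_nonneg hy ha) using 1
  have hexp (t : ℝ) : Real.exp (-(t * y)) * digammaKernel a t =
      Real.exp (-(t * y)) * ((1 - Real.exp (-(t * a))) / t)
        - Real.exp (-(t * (y + a))) * binetKernel t := by
    rw [digammaKernel_eq, mul_add, neg_add, Real.exp_add]
    ring
  simp_rw [hexp]
  rw [integral_sub (integrableOn_exp_neg_mul_one_sub_exp_div hy ha)
    (integrableOn_exp_neg_mul_binetKernel (add_pos_of_pos_of_nonneg hy ha)),
    integral_exp_neg_mul_one_sub_exp_div hy ha]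
  ring

end Digamma

section Laplace

/-- The Laplace transform `s ↦ ∫ t in (0, ∞), e^(-st) f t` of a complex-valued function. -/
noncomputable def laplace (f : ℝ → ℂ) (s : ℂ) : ℂ :=
  ∫ t in Ioi (0 : ℝ), Complex.exp (-(s * t)) * f t

/-- Absolute convergence of the integral defining the Laplace transform of `f` at `s`. -/
def LaplaceConverges (f : ℝ → ℂ) (s : ℂ) : Prop :=
  IntegrableOn (fun t : ℝ => Complex.exp (-(s * t)) * f t) (Ioi 0)

variable {f g : ℝ → ℂ} {s s₀ : ℂ}

lemma norm_exp_neg_mul_ofReal (s : ℂ) (t : ℝ) :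
    ‖Complex.exp (-(s * t))‖ = Real.exp (-(s.re * t)) := by
  simp [Complex.norm_exp]

lemma LaplaceConverges.mono (hf : LaplaceConverges f s₀) (hs : s₀.re ≤ s.re) :
    LaplaceConverges f s := by
  have hfactor (t : ℝ) : Complex.exp (-(s * t)) * f t =
      Complex.exp (-((s - s₀) * t)) * (Complex.exp (-(s₀ * t)) * f t) := by
    rw [← mul_assoc, ← Complex.exp_add]
    ring_nf
  simp only [LaplaceConverges, hfactor]
  refine Integrable.bdd_mul (c := 1) hf (by fun_prop)
    (ae_restrict_of_forall_mem measurableSet_Ioi fun t (ht : 0 < t) => ?_)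
  rw [norm_exp_neg_mul_ofReal]
  exact Real.exp_le_one_iff.2 (neg_nonpos.2 (mul_nonneg (by simpa using hs) ht.le))

lemma LaplaceConverges.aestronglyMeasurable (hf : LaplaceConverges f s) :
    AEStronglyMeasurable f (volume.restrict (Ioi 0)) := by
  have hexp : AEStronglyMeasurable (fun t : ℝ => Complex.exp (s * t))
      (volume.restrict (Ioi 0)) := by
    fun_prop
  refine (hexp.mul (Integrable.aestronglyMeasurable hf)).congr (Eventually.of_forall fun t => ?_)
  simp only [Pi.mul_apply]
  rw [← mul_assoc, ← Complex.exp_add]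
  simp

lemma norm_exp_neg_mul_mul_le {z : ℂ} {δ t : ℝ} (hδ : 0 < δ) (hz : s₀.re + δ ≤ z.re) (ht : 0 < t) :
    ‖Complex.exp (-(z * t)) * (t * f t)‖ ≤ δ⁻¹ * ‖Complex.exp (-(s₀ * t)) * f t‖ := by
  have hexp : Real.exp (-(z.re * t)) * t ≤ δ⁻¹ * Real.exp (-(s₀.re * t)) := by
    have h1 : δ * t ≤ Real.exp (δ * t) := by linarith [Real.add_one_le_exp (δ * t)]
    have h2 : Real.exp (-(z.re * t)) * Real.exp (δ * t) ≤ Real.exp (-(s₀.re * t)) := by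
      rw [← Real.exp_add]
      exact Real.exp_le_exp.2 (by nlinarith)
    rw [le_inv_mul_iff₀ hδ]
    nlinarith [mul_le_mul_of_nonneg_left h1 (Real.exp_pos (-(z.re * t))).le]
  rw [norm_mul, norm_mul, norm_mul, norm_exp_neg_mul_ofReal, norm_exp_neg_mul_ofReal,
    Complex.norm_of_nonneg ht.le, ← mul_assoc, ← mul_assoc]
  exact mul_le_mul_of_nonneg_right hexp (norm_nonneg _)

theorem hasDerivAt_laplace (hf : LaplaceConverges f s₀) (hs : s₀.re < s.re) :
    HasDerivAt (laplace f) (-laplace (fun t : ℝ => (t : ℂ) * f t) s) s := by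
  obtain ⟨δ, hδ, hs'⟩ : ∃ δ > 0, s₀.re + 2 * δ ≤ s.re :=
    ⟨(s.re - s₀.re) / 2, by linarith, by linarith⟩
  have hball {z : ℂ} (hz : z ∈ Metric.ball s δ) : s₀.re + δ ≤ z.re := by
    have := (Complex.abs_re_le_norm (z - s)).trans (mem_ball_iff_norm.1 hz).le
    rw [Complex.sub_re] at this
    linarith [(abs_le.1 this).1]
  have hfm := hf.aestronglyMeasurable
  have hexp_meas (z : ℂ) :
      AEStronglyMeasurable (fun t : ℝ => Complex.exp (-(z * t))) (volume.restrict (Ioi 0)) := by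
    fun_prop
  have hderiv := (hasDerivAt_integral_of_dominated_loc_of_deriv_le (μ := volume.restrict (Ioi 0))
    (F := fun (z : ℂ) (t : ℝ) => Complex.exp (-(z * t)) * f t)
    (F' := fun z (t : ℝ) => -(Complex.exp (-(z * t)) * (t * f t)))
    (bound := fun t : ℝ => δ⁻¹ * ‖Complex.exp (-(s₀ * t)) * f t‖) (Metric.ball_mem_nhds s hδ)
    (Eventually.of_forall fun z => (hexp_meas z).mul hfm) (hf.mono hs.le)
    ((hexp_meas s).mul (Complex.measurable_ofReal.aestronglyMeasurable.mul hfm)).neg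
    (ae_restrict_of_forall_mem measurableSet_Ioi fun t ht z hz => by
      rw [norm_neg]
      exact norm_exp_neg_mul_mul_le hδ (hball hz) ht)
    (Integrable.norm hf |>.const_mul _)
    (Eventually.of_forall fun t z _ => by
      refine (((hasDerivAt_id' z).mul_const (t : ℂ)).fun_neg.cexp.mul_const (f t)).congr_deriv ?_
      ring)).2
  rwa [integral_neg] at hderiv

theorem laplace_convolution (hf : LaplaceConverges f s) (hg : LaplaceConverges g s) :
    laplace (fun w => ∫ v in 0..w, f v * g (w - v)) s = laplace f s * laplace g s := by
  refine Eq.trans (integral_congr_ae (Eventually.of_forall fun w => ?_))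
    (integral_posConvolution hf hg (ContinuousLinearMap.mul ℝ ℂ))
  beta_reduce
  rw [← intervalIntegral.integral_const_mul]
  refine intervalIntegral.integral_congr fun v _ => ?_
  simp only [ContinuousLinearMap.mul_apply']
  rw [mul_mul_mul_comm, ← Complex.exp_add]
  push_cast
  ring_nf

lemma laplace_ofReal (f : ℝ → ℝ) (σ : ℝ) :
    laplace (fun t => (f t : ℂ)) σ =
      ((∫ t in Ioi (0 : ℝ), Real.exp (-(t * σ)) * f t : ℝ) : ℂ) := by
  refine Eq.trans (integral_congr_ae (Eventually.of_forall fun t => ?_)) integral_ofReal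
  simp [mul_comm]

lemma laplaceConverges_ofReal {f : ℝ → ℝ} {σ : ℝ}
    (hf : IntegrableOn (fun t => Real.exp (-(t * σ)) * f t) (Ioi 0)) :
    LaplaceConverges (fun t => (f t : ℂ)) σ := by
  refine (Integrable.ofReal hf).congr (Eventually.of_forall fun t => ?_)
  simp [mul_comm]

lemma laplaceConverges_of_norm_le {μ l C : ℝ} (hμ : 0 < μ) (hs : l < s.re)
    (hf : AEStronglyMeasurable f (volume.restrict (Ioi 0)))
    (hC : ∀ t, 0 < t → ‖f t‖ ≤ C * (t ^ (μ - 1) * Real.exp (l * t))) : LaplaceConverges f s := by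
  have hgamma : IntegrableOn (fun t : ℝ => t ^ (μ - 1) * Real.exp (-(s.re - l) * t)) (Ioi 0) := by
    simpa only [Real.rpow_one] using integrableOn_rpow_mul_exp_neg_mul_rpow (p := 1)
      (by linarith : -1 < μ - 1) one_pos (sub_pos.2 hs)
  refine (hgamma.const_mul C).mono' (AEStronglyMeasurable.mul (by fun_prop) hf)
    (ae_restrict_of_forall_mem measurableSet_Ioi fun t ht => ?_)
  rw [norm_mul, norm_exp_neg_mul_ofReal]
  refine (mul_le_mul_of_nonneg_left (hC t ht) (Real.exp_pos _).le).trans_eq ?_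
  rw [show -(s.re - l) * t = -(s.re * t) + l * t by ring, Real.exp_add]
  ring

end Laplace

section GammaProduct

variable {ι κ : Type*} [Fintype ι] [Fintype κ] {A a : ι → ℝ} {B b : κ → ℝ}

/-- The product `∏ k, Γ (A k * s + a k)`. -/
noncomputable def gammaProd (A a : ι → ℝ) (s : ℂ) : ℂ :=
  ∏ k, Complex.Gamma ((A k : ℂ) * s + (a k : ℂ))

/-- The function whose Laplace transform is the part of the logarithmic derivative of
`gammaProd A a` that decays at infinity. -/
noncomputable def digammaSum (A a : ι → ℝ) (v : ℝ) : ℝ :=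
  ∑ k, digammaKernel (a k) (v / A k)

/-- The kernel of the integral equation; it is the function `v ↦ Q (e⁻ᵛ)` of the theorem when
`∑ A = ∑ B`. -/
noncomputable def gammaQuotientKernel (A a : ι → ℝ) (B b : κ → ℝ) (v : ℝ) : ℝ :=
  digammaSum B b v - digammaSum A a v

lemma continuousOn_digammaSum (hA : ∀ k, 0 < A k) : ContinuousOn (digammaSum A a) (Ioi 0) :=
  continuousOn_finsetSum _ fun k _ =>
    (continuousOn_digammaKernel (a k)).comp (by fun_prop) fun _ hv => div_pos hv (hA k)

lemma exists_abs_digammaSum_sub_le (hA : ∀ k, 0 < A k) (ha : ∀ k, 0 ≤ a k) :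
    ∃ M, ∀ v, 0 < v → |digammaSum A a v - (∑ k, a k - Fintype.card ι / 2)| ≤ M * v := by
  refine ⟨∑ k, (a k ^ 2 + a k + 1 / 2) / A k, fun v hv => ?_⟩
  have hsum : digammaSum A a v - (∑ k, a k - Fintype.card ι / 2) =
      ∑ k, (digammaKernel (a k) (v / A k) - (a k - 1 / 2)) := by
    simp only [digammaSum, Finset.sum_sub_distrib, Finset.sum_const, Finset.card_univ, nsmul_eq_mul]
    ring
  rw [hsum, Finset.sum_mul]
  refine (Finset.abs_sum_le_sum_abs _ _).trans (Finset.sum_le_sum fun k _ => ?_)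
  exact (abs_digammaKernel_sub_le (ha k) (div_pos hv (hA k))).trans_eq (by ring)

lemma integrableOn_exp_neg_mul_digammaKernel_div {A a σ : ℝ} (hA : 0 < A) (ha : 0 ≤ a)
    (hσ : 0 < σ) : IntegrableOn (fun t => Real.exp (-(t * σ)) * digammaKernel a (t / A)) (Ioi 0) :=
  integrableOn_exp_neg_mul_of_bounded hσ
    (((continuousOn_digammaKernel a).comp (by fun_prop) fun _ ht =>
      div_pos ht hA).aestronglyMeasurable measurableSet_Ioi)
    fun _ ht => abs_digammaKernel_le ha (div_pos ht hA)

lemma integrableOn_exp_neg_mul_digammaSum {σ : ℝ} (hA : ∀ k, 0 < A k) (ha : ∀ k, 0 ≤ a k)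
    (hσ : 0 < σ) : IntegrableOn (fun t => Real.exp (-(t * σ)) * digammaSum A a t) (Ioi 0) := by
  simp only [digammaSum, Finset.mul_sum]
  exact integrable_finsetSum _ fun k _ =>
    integrableOn_exp_neg_mul_digammaKernel_div (hA k) (ha k) hσ

lemma integral_exp_neg_mul_comp_div {A : ℝ} (hA : 0 < A) (f : ℝ → ℝ) (σ : ℝ) :
    ∫ t in Ioi (0 : ℝ), Real.exp (-(t * σ)) * f (t / A) =
      A * ∫ t in Ioi (0 : ℝ), Real.exp (-(t * (A * σ))) * f t := by
  have hscale := integral_comp_mul_left_Ioi (fun t => Real.exp (-(t * σ)) * f (t / A)) 0 hA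
  rw [mul_zero, smul_eq_mul] at hscale
  rw [← mul_inv_cancel_left₀ hA.ne' (∫ t in Ioi (0 : ℝ), Real.exp (-(t * σ)) * f (t / A)), ← hscale]
  simp only [mul_div_cancel_left₀ _ hA.ne', mul_assoc, mul_left_comm]

lemma hasDerivAt_log_Gamma_mul_add {A a σ : ℝ} (hA : 0 < A) (ha : 0 ≤ a) (hσ : 0 < σ) :
    HasDerivAt (fun σ => Real.log (Real.Gamma (A * σ + a)))
      (A * Real.log A + A * Real.log σ
        + ∫ t in Ioi (0 : ℝ), Real.exp (-(t * σ)) * digammaKernel a (t / A)) σ := by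
  refine ((hasDerivAt_log_Gamma_add ha (mul_pos hA hσ)).comp σ
    (((hasDerivAt_id' σ).const_mul A).add_const a)).congr_deriv ?_
  rw [integral_exp_neg_mul_comp_div hA, Real.log_mul hA.ne' hσ.ne']
  ring

lemma hasDerivAt_sum_log_Gamma {σ : ℝ} (hA : ∀ k, 0 < A k) (ha : ∀ k, 0 ≤ a k) (hσ : 0 < σ) :
    HasDerivAt (fun σ => ∑ k, Real.log (Real.Gamma (A k * σ + a k)))
      (∑ k, A k * Real.log (A k) + (∑ k, A k) * Real.log σ
        + ∫ t in Ioi (0 : ℝ), Real.exp (-(t * σ)) * digammaSum A a t) σ := by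
  refine (HasDerivAt.fun_sum fun k _ =>
    hasDerivAt_log_Gamma_mul_add (hA k) (ha k) hσ).congr_deriv ?_
  simp only [digammaSum, Finset.mul_sum]
  rw [integral_finsetSum _ fun k _ =>
    integrableOn_exp_neg_mul_digammaKernel_div (hA k) (ha k) hσ,
    Finset.sum_add_distrib, Finset.sum_add_distrib, Finset.sum_mul]

lemma gammaProd_ofReal {σ : ℝ} (hpos : ∀ k, 0 < A k * σ + a k) :
    gammaProd A a σ =
      ((Real.exp (∑ k, Real.log (Real.Gamma (A k * σ + a k))) : ℝ) : ℂ) := by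
  rw [Real.exp_sum, Complex.ofReal_prod]
  refine Finset.prod_congr rfl fun k _ => ?_
  rw [Real.exp_log (Real.Gamma_pos_of_pos (hpos k)), ← Complex.Gamma_ofReal]
  push_cast
  rfl

lemma differentiableAt_Gamma_of_re_pos {s : ℂ} (hs : 0 < s.re) :
    DifferentiableAt ℂ Complex.Gamma s :=
  Complex.differentiableAt_Gamma s fun m hm => by
    rw [hm, Complex.neg_re, Complex.natCast_re] at hs
    linarith [m.cast_nonneg (α := ℝ)]

lemma differentiableAt_gammaProd {s : ℂ} (hs : ∀ k, 0 < A k * s.re + a k) :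
    DifferentiableAt ℂ (gammaProd A a) s :=
  DifferentiableAt.fun_finsetProd fun k _ =>
    (differentiableAt_Gamma_of_re_pos (by simpa using hs k)).comp s (by fun_prop)

lemma differentiable_inv_gammaProd (B b : κ → ℝ) :
    Differentiable ℂ fun s => (gammaProd B b s)⁻¹ := by
  simp only [gammaProd, ← Finset.prod_inv_distrib]
  exact Differentiable.fun_finsetProd fun k _ =>
    Complex.differentiable_one_div_Gamma.comp (by fun_prop)

end GammaProduct

section LaplaceGammaQuotient

lemma exists_eq_const_mul_of_hasDerivAt {f g p : ℝ → ℂ} {l : ℝ}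
    (hf : ∀ σ, l < σ → HasDerivAt f (p σ * f σ) σ) (hg : ∀ σ, l < σ → HasDerivAt g (p σ * g σ) σ)
    (hg₀ : ∀ σ, l < σ → g σ ≠ 0) : ∃ C, ∀ σ, l < σ → f σ = C * g σ := by
  have hquot (σ : ℝ) (hσ : l < σ) : HasDerivAt (fun σ => f σ / g σ) 0 σ := by
    refine ((hf σ hσ).fun_div (hg σ hσ) (hg₀ σ hσ)).congr_deriv ?_
    ring
  obtain ⟨C, hC⟩ := isOpen_Ioi.exists_is_const_of_deriv_eq_zero isPreconnected_Ioi
    (fun σ hσ => (hquot σ hσ).differentiableAt.differentiableWithinAt)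
    (fun σ hσ => (hquot σ hσ).deriv)
  exact ⟨C, fun σ hσ => (div_eq_iff (hg₀ σ hσ)).1 (hC σ hσ)⟩

lemma eqOn_halfPlane_of_eq_ofReal {f g : ℂ → ℂ} {l : ℝ}
    (hf : DifferentiableOn ℂ f {s | l < s.re}) (hg : DifferentiableOn ℂ g {s | l < s.re})
    (hfg : ∀ σ : ℝ, l < σ → f σ = g σ) : EqOn f g {s | l < s.re} := by
  have hopen : IsOpen {s : ℂ | l < s.re} := isOpen_lt continuous_const Complex.continuous_re
  have hreal : Tendsto (fun x : ℝ => (x : ℂ)) (𝓝[>] (l + 1)) (𝓝[≠] ((l + 1 : ℝ) : ℂ)) :=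
    tendsto_nhdsWithin_iff.2
      ⟨Complex.continuous_ofReal.continuousWithinAt, by
        filter_upwards [self_mem_nhdsWithin] with x hx
        exact fun h => (ne_of_gt hx) (Complex.ofReal_injective h)⟩
  refine (hf.analyticOnNhd hopen).eqOn_of_preconnected_of_frequently_eq (hg.analyticOnNhd hopen)
    (convex_halfSpace_re_gt l).isPreconnected (z₀ := ((l + 1 : ℝ) : ℂ)) (by simp)
    (hreal.frequently (Eventually.frequently ?_))
  filter_upwards [self_mem_nhdsWithin] with x hx
  exact hfg x ((lt_add_one l).trans hx)

lemma hasDerivAt_laplace_of_volterra {k q : ℝ → ℂ} {s s₀ : ℂ} (hk : LaplaceConverges k s₀)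
    (hq : LaplaceConverges q s) (hs : s₀.re < s.re)
    (hvolterra : ∀ w : ℝ, 0 < w → w * k w = ∫ v in 0..w, k v * q (w - v)) :
    HasDerivAt (laplace k) (-laplace q s * laplace k s) s := by
  refine (hasDerivAt_laplace hk hs).congr_deriv ?_
  rw [neg_mul, mul_comm, ← laplace_convolution (hk.mono hs.le) hq]
  refine congrArg _ (setIntegral_congr_fun measurableSet_Ioi fun w hw => ?_)
  simp only [hvolterra w hw]

variable {ι κ : Type*} [Fintype ι] [Fintype κ] {A a : ι → ℝ} {B b : κ → ℝ} {ρ : ℝ}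

lemma hasDerivAt_log_gammaQuotient {σ : ℝ} (hA : ∀ k, 0 < A k) (hB : ∀ j, 0 < B j)
    (ha : ∀ k, 0 ≤ a k) (hb : ∀ j, 0 ≤ b j) (hsum : ∑ i, A i = ∑ j, B j)
    (hρ : ρ = (∏ k, A k ^ A k) * ∏ j, B j ^ (-B j)) (hσ : 0 < σ) :
    HasDerivAt (fun σ => ∑ k, Real.log (Real.Gamma (A k * σ + a k))
        - ∑ j, Real.log (Real.Gamma (B j * σ + b j)) - σ * Real.log ρ)
      (-∫ t in Ioi (0 : ℝ), Real.exp (-(t * σ)) * gammaQuotientKernel A a B b t) σ := by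
  have hlogρ : Real.log ρ = ∑ k, A k * Real.log (A k) - ∑ j, B j * Real.log (B j) := by
    have hApow (k : ι) : 0 < A k ^ A k := Real.rpow_pos_of_pos (hA k) _
    have hBpow (j : κ) : 0 < B j ^ (-B j) := Real.rpow_pos_of_pos (hB j) _
    rw [hρ, Real.log_mul (Finset.prod_pos fun k _ => hApow k).ne'
      (Finset.prod_pos fun j _ => hBpow j).ne', Real.log_prod fun k _ => (hApow k).ne',
      Real.log_prod fun j _ => (hBpow j).ne', sub_eq_add_neg, ← Finset.sum_neg_distrib]
    simp only [Real.log_rpow (hA _), Real.log_rpow (hB _), neg_mul]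
  refine (((hasDerivAt_sum_log_Gamma hA ha hσ).fun_sub (hasDerivAt_sum_log_Gamma hB hb hσ)).fun_sub
    ((hasDerivAt_id' σ).mul_const (Real.log ρ))).congr_deriv ?_
  simp only [gammaQuotientKernel, mul_sub]
  rw [integral_sub (integrableOn_exp_neg_mul_digammaSum hB hb hσ)
    (integrableOn_exp_neg_mul_digammaSum hA ha hσ), hlogρ, hsum]
  ring

lemma gammaQuotient_ofReal {σ : ℝ} (hApos : ∀ k, 0 < A k * σ + a k)
    (hBpos : ∀ j, 0 < B j * σ + b j) (hρ : 0 < ρ) :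
    gammaProd A a σ / gammaProd B b σ * (ρ : ℂ) ^ (-(σ : ℂ)) =
      ((Real.exp (∑ k, Real.log (Real.Gamma (A k * σ + a k))
        - ∑ j, Real.log (Real.Gamma (B j * σ + b j)) - σ * Real.log ρ) : ℝ) : ℂ) := by
  rw [gammaProd_ofReal hApos, gammaProd_ofReal hBpos, ← Complex.ofReal_neg,
    ← Complex.ofReal_cpow hρ.le, Real.rpow_def_of_pos hρ, Real.exp_sub, Real.exp_sub,
    mul_neg, Real.exp_neg, mul_comm (Real.log ρ)]
  push_cast
  rfl

lemma differentiableAt_gammaQuotient {s : ℂ} (hs : ∀ k, 0 < A k * s.re + a k) (hρ : 0 < ρ) :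
    DifferentiableAt ℂ (fun s => gammaProd A a s / gammaProd B b s * (ρ : ℂ) ^ (-s)) s := by
  simp only [div_eq_mul_inv]
  exact ((differentiableAt_gammaProd hs).fun_mul (differentiable_inv_gammaProd B b s)).fun_mul
    (differentiableAt_id.fun_neg.const_cpow (Or.inl (Complex.ofReal_ne_zero.2 hρ.ne')))

lemma laplaceConverges_gammaQuotientKernel {s : ℂ} (hA : ∀ k, 0 < A k) (hB : ∀ j, 0 < B j)
    (ha : ∀ k, 0 ≤ a k) (hb : ∀ j, 0 ≤ b j) (hs : 0 < s.re) :
    LaplaceConverges (fun t => (gammaQuotientKernel A a B b t : ℂ)) s := by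
  refine (laplaceConverges_ofReal (σ := s.re) ?_).mono le_rfl
  simp only [gammaQuotientKernel, mul_sub]
  exact (integrableOn_exp_neg_mul_digammaSum hB hb hs).sub
    (integrableOn_exp_neg_mul_digammaSum hA ha hs)

lemma prod_rpow_self_mul_pos (hA : ∀ k, 0 < A k) (hB : ∀ j, 0 < B j) :
    0 < (∏ k, A k ^ A k) * ∏ j, B j ^ (-B j) :=
  mul_pos (Finset.prod_pos fun k _ => Real.rpow_pos_of_pos (hA k) _)
    (Finset.prod_pos fun j _ => Real.rpow_pos_of_pos (hB j) _)

theorem exists_laplace_eq_const_mul_gammaQuotient (hA : ∀ k, 0 < A k) (hB : ∀ j, 0 < B j)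
    (ha : ∀ k, 0 ≤ a k) (hb : ∀ j, 0 ≤ b j) (hsum : ∑ i, A i = ∑ j, B j)
    (hρ : ρ = (∏ k, A k ^ A k) * ∏ j, B j ^ (-B j)) {k : ℝ → ℂ} {l : ℝ} (hl : 0 ≤ l)
    (hk : ∀ s : ℂ, l < s.re → LaplaceConverges k s)
    (hvolterra : ∀ w : ℝ, 0 < w →
      w * k w = ∫ v in 0..w, k v * (gammaQuotientKernel A a B b (w - v) : ℂ)) :
    ∃ C : ℂ, ∀ s : ℂ, l < s.re →
      laplace k s = C * (gammaProd A a s / gammaProd B b s * (ρ : ℂ) ^ (-s)) := by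
  have hρ₀ : 0 < ρ := hρ ▸ prod_rpow_self_mul_pos hA hB
  have hderiv (s : ℂ) (hs : l < s.re) : HasDerivAt (laplace k)
      (-laplace (fun t => (gammaQuotientKernel A a B b t : ℂ)) s * laplace k s) s := by
    obtain ⟨σ, hlσ, hσs⟩ := exists_between hs
    exact hasDerivAt_laplace_of_volterra (s₀ := σ) (hk σ hlσ)
      (laplaceConverges_gammaQuotientKernel hA hB ha hb (hl.trans_lt hs)) hσs hvolterra
  have hApos {σ : ℝ} (hσ : l < σ) (k : ι) : 0 < A k * σ + a k :=
    add_pos_of_pos_of_nonneg (mul_pos (hA k) (hl.trans_lt hσ)) (ha k)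
  have hBpos {σ : ℝ} (hσ : l < σ) (j : κ) : 0 < B j * σ + b j :=
    add_pos_of_pos_of_nonneg (mul_pos (hB j) (hl.trans_lt hσ)) (hb j)
  obtain ⟨C, hC⟩ := exists_eq_const_mul_of_hasDerivAt
    (fun σ hσ => (hderiv σ hσ).comp_ofReal) (fun σ hσ =>
      ((hasDerivAt_log_gammaQuotient hA hB ha hb hsum hρ
        (hl.trans_lt hσ)).exp.ofReal_comp).congr_deriv (by
          rw [laplace_ofReal, mul_comm]
          push_cast
          rfl))
    (fun σ _ => Complex.ofReal_ne_zero.2 (Real.exp_pos _).ne')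
  exact ⟨C, eqOn_halfPlane_of_eq_ofReal
    (fun s hs => (hderiv s hs).differentiableAt.differentiableWithinAt)
    (fun s hs => ((differentiableAt_gammaQuotient (hApos hs)
      hρ₀).const_mul C).differentiableWithinAt)
    fun σ hσ => by rw [hC σ hσ, gammaQuotient_ofReal (hApos hσ) (hBpos hσ) hρ₀]⟩

end LaplaceGammaQuotient

section FixedPoint

open scoped BoundedContinuousFunction

variable {X α : Type*} [TopologicalSpace X] [MeasurableSpace X] [OpensMeasurableSpace X]
  [MeasurableSpace α] {ν : Measure α} {P R : X → α → ℝ} {φ : X → α → X}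
  {p r : α → ℝ}

lemma integrable_add_mul_comp (hP_meas : ∀ x, AEStronglyMeasurable (P x) ν)
    (hR_meas : ∀ x, AEStronglyMeasurable (R x) ν) (hφ_meas : ∀ x, Measurable (φ x))
    (hP : ∀ x, ∀ᵐ θ ∂ν, |P x θ| ≤ p θ) (hR : ∀ x, ∀ᵐ θ ∂ν, |R x θ| ≤ r θ)
    (hp : Integrable p ν) (hr : Integrable r ν) (N : X →ᵇ ℝ) (x : X) :
    Integrable (fun θ => P x θ + R x θ * N (φ x θ)) ν :=
  (hp.mono' (hP_meas x) (hP x)).add ((hr.mono' (hR_meas x) (hR x)).mul_bdd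
    (N.continuous.measurable.comp (hφ_meas x)).aestronglyMeasurable
    (Eventually.of_forall fun _ => N.norm_coe_le_norm _))

theorem exists_boundedContinuousFunction_eq_integral [FirstCountableTopology X]
    (hP_meas : ∀ x, AEStronglyMeasurable (P x) ν)
    (hR_meas : ∀ x, AEStronglyMeasurable (R x) ν) (hφ_meas : ∀ x, Measurable (φ x))
    (hP_cont : ∀ᵐ θ ∂ν, Continuous fun x => P x θ) (hR_cont : ∀ᵐ θ ∂ν, Continuous fun x => R x θ)
    (hφ_cont : ∀ θ, Continuous fun x => φ x θ)
    (hP : ∀ x, ∀ᵐ θ ∂ν, |P x θ| ≤ p θ) (hR : ∀ x, ∀ᵐ θ ∂ν, |R x θ| ≤ r θ)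
    (hp : Integrable p ν) (hr : Integrable r ν) (hr_lt : ∫ θ, r θ ∂ν < 1) :
    ∃ N : X →ᵇ ℝ, ∀ x, Integrable (fun θ => P x θ + R x θ * N (φ x θ)) ν ∧
      N x = ∫ θ, (P x θ + R x θ * N (φ x θ)) ∂ν := by
  have hint := integrable_add_mul_comp hP_meas hR_meas hφ_meas hP hR hp hr
  have hbound (N : X →ᵇ ℝ) (x : X) : ∀ᵐ θ ∂ν, ‖P x θ + R x θ * N (φ x θ)‖ ≤ p θ + r θ * ‖N‖ := by
    filter_upwards [hP x, hR x] with θ hPθ hRθ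
    exact (norm_add_le _ _).trans (add_le_add hPθ (norm_mul_le_of_le hRθ (N.norm_coe_le_norm _)))
  have hbound_int (N : X →ᵇ ℝ) : Integrable (fun θ => p θ + r θ * ‖N‖) ν :=
    hp.add (hr.mul_const _)
  have hcont (N : X →ᵇ ℝ) : Continuous fun x => ∫ θ, (P x θ + R x θ * N (φ x θ)) ∂ν := by
    refine continuous_of_dominated (fun x => (hint N x).aestronglyMeasurable) (hbound N)
      (hbound_int N) ?_
    filter_upwards [hP_cont, hR_cont] with θ hPθ hRθ
    exact hPθ.add (hRθ.mul (N.continuous.comp (hφ_cont θ)))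
  let T (N : X →ᵇ ℝ) : X →ᵇ ℝ := BoundedContinuousFunction.ofNormedAddCommGroup _ (hcont N)
    (∫ θ, (p θ + r θ * ‖N‖) ∂ν) fun x => norm_integral_le_of_norm_le (hbound_int N) (hbound N x)
  have hT : ContractingWith (∫ θ, r θ ∂ν).toNNReal T := by
    refine ⟨Real.toNNReal_lt_one.2 hr_lt, LipschitzWith.of_dist_le_mul fun N N' => ?_⟩
    rw [BoundedContinuousFunction.dist_le (by positivity)]
    intro x
    have hsub : dist (T N x) (T N' x) = ‖∫ θ, R x θ * (N (φ x θ) - N' (φ x θ)) ∂ν‖ := by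
      rw [dist_eq_norm]
      refine congrArg norm ((integral_sub (hint N x) (hint N' x)).symm.trans ?_)
      exact integral_congr_ae (Eventually.of_forall fun θ => by ring)
    rw [hsub]
    refine (norm_integral_le_of_norm_le (hr.mul_const (dist N N')) ?_).trans ?_
    · filter_upwards [hR x] with θ hRθ
      exact norm_mul_le_of_le hRθ (N.dist_coe_le_dist _)
    · rw [integral_mul_const]
      exact mul_le_mul_of_nonneg_right (Real.le_coe_toNNReal _) dist_nonneg
  exact ⟨hT.fixedPoint T, fun x =>
    ⟨hint _ x, DFunLike.congr_fun hT.fixedPoint_isFixedPt.symm x⟩⟩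

end FixedPoint

section Volterra

open scoped BoundedContinuousFunction

variable {q : ℝ → ℝ} {μ M : ℝ}

lemma integrableOn_Ioo_rpow {s : ℝ} (hs : -1 < s) :
    IntegrableOn (fun θ : ℝ => θ ^ s) (Ioo 0 1) :=
  (intervalIntegral.integrableOn_Ioo_rpow_iff one_pos).2 hs

lemma setIntegral_Ioo_rpow {s : ℝ} (hs : -1 < s) :
    ∫ θ in Ioo (0 : ℝ) 1, θ ^ s = 1 / (s + 1) := by
  rw [← integral_Ioc_eq_integral_Ioo, ← intervalIntegral.integral_of_le zero_le_one,
    integral_rpow (Or.inl hs), Real.one_rpow, Real.zero_rpow (by linarith), sub_zero]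

lemma abs_sub_div_mul_exp_neg_le (hM : ∀ v, 0 < v → |q v - μ| ≤ M * v) (hM₀ : 0 ≤ M) {w θ : ℝ}
    (hw : 0 < w) (hθ : θ ∈ Ioo (0 : ℝ) 1) :
    |(q (w * (1 - θ)) - μ) / w * Real.exp (-((M + 1) * w))| ≤ M := by
  have hexp : Real.exp (-((M + 1) * w)) ≤ 1 := Real.exp_le_one_iff.2 (by nlinarith)
  have hq : |(q (w * (1 - θ)) - μ) / w| ≤ M := by
    rw [abs_div, abs_of_pos hw, div_le_iff₀ hw]
    nlinarith [hM (w * (1 - θ)) (mul_pos hw (sub_pos.2 hθ.2)),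
      mul_nonneg hM₀ (mul_pos hw hθ.1).le]
  rw [abs_mul, Real.abs_exp]
  exact (mul_le_of_le_one_right (abs_nonneg _) hexp).trans hq

lemma abs_mul_exp_neg_le (hμ : 0 < μ) (hM : ∀ v, 0 < v → |q v - μ| ≤ M * v) (hM₀ : 0 ≤ M) {v : ℝ}
    (hv : 0 < v) : |q v * Real.exp (-((M + 1) * v))| ≤ μ + M / (M + 1) := by
  have hq : |q v| ≤ μ + M * v := by
    have := (abs_sub_abs_le_abs_sub (q v) μ).trans (hM v hv)
    rw [abs_of_pos hμ] at this
    linarith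
  have hexp : Real.exp (-((M + 1) * v)) ≤ 1 := Real.exp_le_one_iff.2 (by nlinarith)
  have hvexp : v * Real.exp (-((M + 1) * v)) ≤ 1 / (M + 1) := by
    rw [le_div_iff₀ (by linarith), Real.exp_neg, mul_right_comm, ← div_eq_mul_inv,
      div_le_one (Real.exp_pos _)]
    linarith [Real.add_one_le_exp ((M + 1) * v)]
  rw [abs_mul, Real.abs_exp]
  calc |q v| * Real.exp (-((M + 1) * v))
      ≤ (μ + M * v) * Real.exp (-((M + 1) * v)) := by gcongr
    _ = μ * Real.exp (-((M + 1) * v)) + M * (v * Real.exp (-((M + 1) * v))) := by ring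
    _ ≤ μ * 1 + M * (1 / (M + 1)) := by gcongr
    _ = μ + M / (M + 1) := by ring

lemma continuousOn_comp_exp_mul_one_sub (hq : ContinuousOn q (Ioi 0)) (x : ℝ) :
    ContinuousOn (fun θ => q (Real.exp x * (1 - θ))) (Ioo 0 1) :=
  hq.comp (by fun_prop) fun _ hθ => mul_pos (Real.exp_pos x) (sub_pos.2 hθ.2)

/- The substitution `k w = w ^ (μ - 1) * (1 + w * e ^ (l * w) * N (log w))` turns the equation
`w * k w = ∫ v in 0..w, k v * q (w - v)` into this equation for `N`. The Euler kernel `θ ^ μ` has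
mass `1 / (μ + 1)`, and with `l = M + 1` the factor multiplying it is less than `μ + 1`. -/
lemma exists_reduced_volterra_solution (hμ : 0 < μ) (hq : ContinuousOn q (Ioi 0))
    (hM : ∀ v, 0 < v → |q v - μ| ≤ M * v) :
    ∃ N : ℝ →ᵇ ℝ, ∀ x,
      let f (θ : ℝ) : ℝ := θ ^ (μ - 1) *
          ((q (Real.exp x * (1 - θ)) - μ) / Real.exp x * Real.exp (-((M + 1) * Real.exp x)))
        + θ ^ μ * (q (Real.exp x * (1 - θ)) *
            Real.exp (-((M + 1) * (Real.exp x * (1 - θ))))) * N (x + Real.log θ)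
      IntegrableOn f (Ioo 0 1) ∧ N x = ∫ θ in Ioo 0 1, f θ := by
  have hM₀ : 0 ≤ M := by simpa using (abs_nonneg _).trans (hM 1 one_pos)
  have hIoo {P : ℝ → Prop} (h : ∀ θ ∈ Ioo (0 : ℝ) 1, P θ) :
      ∀ᵐ θ ∂volume.restrict (Ioo (0 : ℝ) 1), P θ :=
    ae_restrict_of_forall_mem measurableSet_Ioo h
  have hqx (x : ℝ) := continuousOn_comp_exp_mul_one_sub hq x
  have hqθ {θ : ℝ} (hθ : θ ∈ Ioo (0 : ℝ) 1) : Continuous fun x => q (Real.exp x * (1 - θ)) :=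
    hq.comp_continuous (by fun_prop) fun x => mul_pos (Real.exp_pos x) (sub_pos.2 hθ.2)
  have hpow (s : ℝ) : ContinuousOn (fun θ : ℝ => θ ^ s) (Ioo 0 1) :=
    continuousOn_id.rpow_const fun θ hθ => Or.inl hθ.1.ne'
  refine exists_boundedContinuousFunction_eq_integral
    (p := fun θ => θ ^ (μ - 1) * M) (r := fun θ => θ ^ μ * (μ + M / (M + 1)))
    (φ := fun x θ => x + Real.log θ)
    (fun x => ((hpow _).mul ((((hqx x).sub continuousOn_const).div_const _).mul_const _)
      ).aestronglyMeasurable measurableSet_Ioo)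
    (fun x => ((hpow _).mul ((hqx x).mul (by fun_prop))).aestronglyMeasurable measurableSet_Ioo)
    (fun x => by fun_prop) (hIoo fun θ hθ => ?_) (hIoo fun θ hθ => ?_) (fun θ => by fun_prop)
    (fun x => hIoo fun θ hθ => ?_) (fun x => hIoo fun θ hθ => ?_)
    ((integrableOn_Ioo_rpow (by linarith)).mul_const _)
    ((integrableOn_Ioo_rpow (by linarith)).mul_const _) ?_
  · exact continuous_const.mul ((((hqθ hθ).sub continuous_const).div Real.continuous_exp
      fun x => (Real.exp_pos x).ne').mul (by fun_prop))
  · exact continuous_const.mul ((hqθ hθ).mul (by fun_prop))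
  · rw [abs_mul, abs_of_pos (Real.rpow_pos_of_pos hθ.1 _)]
    exact mul_le_mul_of_nonneg_left (abs_sub_div_mul_exp_neg_le hM hM₀ (Real.exp_pos x) hθ)
      (Real.rpow_pos_of_pos hθ.1 _).le
  · rw [abs_mul, abs_of_pos (Real.rpow_pos_of_pos hθ.1 _)]
    exact mul_le_mul_of_nonneg_left
      (abs_mul_exp_neg_le hμ hM hM₀ (mul_pos (Real.exp_pos x) (sub_pos.2 hθ.2)))
      (Real.rpow_pos_of_pos hθ.1 _).le
  · rw [integral_mul_const, setIntegral_Ioo_rpow (by linarith), one_div_mul_eq_div,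
      div_lt_one (by linarith)]
    exact add_lt_add_right ((div_lt_one (by linarith)).2 (lt_add_one M)) μ

/-- The candidate solution `k` of the Volterra equation, in terms of its reduced form `N`. -/
noncomputable def volterraAnsatz (μ l : ℝ) (N : ℝ → ℝ) (w : ℝ) : ℝ :=
  w ^ (μ - 1) * (1 + w * Real.exp (l * w) * N (Real.log w))

lemma continuousOn_volterraAnsatz {l : ℝ} (N : ℝ →ᵇ ℝ) :
    ContinuousOn (volterraAnsatz μ l N) (Ioi 0) :=
  (continuousOn_id.rpow_const fun w hw => Or.inl (ne_of_gt hw)).mul <|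
    continuousOn_const.add <| ContinuousOn.mul (by fun_prop) <| N.continuous.comp_continuousOn <|
      Real.continuousOn_log.mono fun _ hw => ne_of_gt hw

lemma abs_volterraAnsatz_le {l : ℝ} (hl : 0 ≤ l) (N : ℝ →ᵇ ℝ) {w : ℝ} (hw : 0 < w) :
    |volterraAnsatz μ l N w| ≤ (1 + ‖N‖) * (w ^ (μ - 1) * Real.exp ((l + 1) * w)) := by
  have hone : 1 ≤ Real.exp ((l + 1) * w) := Real.one_le_exp (by positivity)
  have hwexp : w * Real.exp (l * w) ≤ Real.exp ((l + 1) * w) := by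
    rw [add_one_mul, add_comm, Real.exp_add]
    gcongr
    linarith [Real.add_one_le_exp w]
  have hfactor : |1 + w * Real.exp (l * w) * N (Real.log w)|
      ≤ (1 + ‖N‖) * Real.exp ((l + 1) * w) := by
    calc |1 + w * Real.exp (l * w) * N (Real.log w)|
        ≤ 1 + w * Real.exp (l * w) * |N (Real.log w)| := by
          refine (abs_add_le _ _).trans_eq ?_
          rw [abs_one, abs_mul, abs_of_pos (by positivity)]
      _ ≤ Real.exp ((l + 1) * w) + Real.exp ((l + 1) * w) * ‖N‖ := by
          gcongr
          exact N.norm_coe_le_norm _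
      _ = (1 + ‖N‖) * Real.exp ((l + 1) * w) := by ring
  rw [volterraAnsatz, abs_mul, abs_of_pos (Real.rpow_pos_of_pos hw _), mul_left_comm]
  gcongr

lemma exists_volterraAnsatz_ne_zero {l : ℝ} (N : ℝ →ᵇ ℝ) :
    ∃ w, 0 < w ∧ volterraAnsatz μ l N w ≠ 0 := by
  have hlim : Tendsto (fun w => 1 + w * Real.exp (l * w) * N (Real.log w)) (𝓝[>] 0) (𝓝 1) := by
    have hzero : Tendsto (fun w => w * Real.exp (l * w)) (𝓝[>] 0) (𝓝 0) := by
      have : Continuous fun w => w * Real.exp (l * w) := by fun_prop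
      simpa only [zero_mul] using (this.tendsto 0).mono_left nhdsWithin_le_nhds
    simpa only [add_zero] using (hzero.zero_mul_isBoundedUnder_le
      (isBoundedUnder_of ⟨‖N‖, fun w => N.norm_coe_le_norm (Real.log w)⟩)).const_add 1
  obtain ⟨w, hne, hw⟩ := ((hlim.eventually_ne one_ne_zero).and self_mem_nhdsWithin).exists
  exact ⟨w, hw, mul_ne_zero (Real.rpow_pos_of_pos hw _).ne' hne⟩

lemma volterraAnsatz_mul_mul {l w θ : ℝ} (N : ℝ → ℝ) (hw : 0 < w) (hθ : 0 < θ) :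
    volterraAnsatz μ l N (w * θ) * q (w - w * θ) =
      w ^ (μ - 1) * (μ * θ ^ (μ - 1) + w * Real.exp (l * w) *
        (θ ^ (μ - 1) * ((q (w * (1 - θ)) - μ) / w * Real.exp (-(l * w)))
          + θ ^ μ * (q (w * (1 - θ)) * Real.exp (-(l * (w * (1 - θ))))) *
            N (Real.log w + Real.log θ))) := by
  have hexp : Real.exp (l * (w * θ)) = Real.exp (l * w) * Real.exp (-(l * (w * (1 - θ)))) := by
    rw [← Real.exp_add]
    ring_nf
  have hcancel : Real.exp (l * w) * Real.exp (-(l * w)) = 1 := by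
    rw [← Real.exp_add, add_neg_cancel, Real.exp_zero]
  have hpow : θ ^ μ = θ ^ (μ - 1) * θ := by rw [← Real.rpow_add_one hθ.ne', sub_add_cancel]
  have hdiv : w * ((q (w * (1 - θ)) - μ) / w) = q (w * (1 - θ)) - μ := mul_div_cancel₀ _ hw.ne'
  rw [← mul_one_sub, volterraAnsatz, Real.mul_rpow hw.le hθ.le, Real.log_mul hw.ne' hθ.ne', hexp,
    hpow]
  linear_combination (-(w ^ (μ - 1) * θ ^ (μ - 1) * (w * ((q (w * (1 - θ)) - μ) / w)))) * hcancel
    - w ^ (μ - 1) * θ ^ (μ - 1) * hdiv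

theorem exists_volterra_solution (hμ : 0 < μ) (hq : ContinuousOn q (Ioi 0))
    (hM : ∀ v, 0 < v → |q v - μ| ≤ M * v) :
    ∃ (k : ℝ → ℝ) (l C : ℝ), 0 ≤ l ∧ ContinuousOn k (Ioi 0) ∧
      (∀ w, 0 < w → |k w| ≤ C * (w ^ (μ - 1) * Real.exp (l * w))) ∧ (∃ w, 0 < w ∧ k w ≠ 0) ∧
      ∀ w, 0 < w → w * k w = ∫ v in 0..w, k v * q (w - v) := by
  have hM₀ : 0 ≤ M := by simpa using (abs_nonneg _).trans (hM 1 one_pos)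
  obtain ⟨N, hN⟩ := exists_reduced_volterra_solution hμ hq hM
  refine ⟨volterraAnsatz μ (M + 1) N, M + 1 + 1, 1 + ‖N‖, by positivity,
    continuousOn_volterraAnsatz N, fun w => abs_volterraAnsatz_le (by positivity) N,
    exists_volterraAnsatz_ne_zero N, fun w hw => ?_⟩
  obtain ⟨hint, hNw⟩ := hN (Real.log w)
  rw [Real.exp_log hw] at hint hNw
  have hscale : w * ∫ θ in Ioo 0 1,
        volterraAnsatz μ (M + 1) N (w * θ) * q (w - w * θ) =
      ∫ v in 0..w, volterraAnsatz μ (M + 1) N v * q (w - v) := by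
    simpa only [mul_zero, mul_one, smul_eq_mul, intervalIntegral.integral_of_le zero_le_one,
      integral_Ioc_eq_integral_Ioo] using intervalIntegral.smul_integral_comp_mul_left
        (a := 0) (b := 1) (fun v => volterraAnsatz μ (M + 1) N v * q (w - v)) w
  rw [← hscale, setIntegral_congr_fun measurableSet_Ioo
      fun θ hθ => volterraAnsatz_mul_mul N hw hθ.1,
    integral_const_mul, integral_add ((integrableOn_Ioo_rpow (by linarith)).const_mul μ)
      (hint.const_mul _), integral_const_mul, integral_const_mul, ← hNw,
    setIntegral_Ioo_rpow (by linarith), sub_add_cancel, mul_one_div_cancel hμ.ne', volterraAnsatz]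

end Volterra

section GammaGrowth

lemma norm_Gamma_le {s : ℂ} (hs : 0 < s.re) : ‖Complex.Gamma s‖ ≤ Real.Gamma s.re := by
  rw [Complex.Gamma_eq_integral hs, Real.Gamma_eq_integral hs, Complex.GammaIntegral]
  refine (norm_integral_le_integral_norm _).trans_eq (setIntegral_congr_fun measurableSet_Ioi ?_)
  intro x hx
  dsimp only
  rw [norm_mul, Complex.norm_real, Real.norm_of_nonneg (Real.exp_pos _).le,
    Complex.norm_cpow_eq_rpow_re_of_pos hx, Complex.sub_re, Complex.one_re]

lemma exists_norm_Gamma_le {α : ℝ} (hα : 0 < α) (β : ℝ) :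
    ∃ C, ∀ s : ℂ, s.re ∈ Icc α β → ‖Complex.Gamma s‖ ≤ C := by
  have hcont : ContinuousOn Real.Gamma (Icc α β) := fun x hx =>
    (Real.differentiableAt_Gamma fun m => by
      have : (0 : ℝ) ≤ m := m.cast_nonneg
      linarith [hx.1]).continuousAt.continuousWithinAt
  obtain ⟨C, hC⟩ := isCompact_Icc.exists_bound_of_continuousOn hcont
  exact ⟨C, fun s hs => (norm_Gamma_le (hα.trans_le hs.1)).trans
    ((le_abs_self _).trans (hC s.re hs))⟩

lemma norm_sin_le_exp_abs_im (z : ℂ) : ‖Complex.sin z‖ ≤ Real.exp |z.im| := by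
  have hneg : ‖Complex.exp (-z * Complex.I)‖ ≤ Real.exp |z.im| := by
    simp [Complex.norm_exp, le_abs_self]
  have hpos : ‖Complex.exp (z * Complex.I)‖ ≤ Real.exp |z.im| := by
    simp [Complex.norm_exp, neg_le_abs]
  rw [Complex.sin, norm_div, norm_mul, Complex.norm_I, mul_one, Complex.norm_ofNat]
  linarith [norm_sub_le (Complex.exp (-z * Complex.I)) (Complex.exp (z * Complex.I))]

lemma inv_Gamma_eq_Gamma_one_sub_mul_sin {s : ℂ} (hs : s.re < 1) :
    (Complex.Gamma s)⁻¹ = Complex.Gamma (1 - s) * Complex.sin (Real.pi * s) / Real.pi := by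
  have hreflection := Complex.Gamma_mul_Gamma_one_sub s
  have hΓ : Complex.Gamma (1 - s) ≠ 0 := Complex.Gamma_ne_zero_of_re_pos (by simpa using hs)
  have hπ : (Real.pi : ℂ) ≠ 0 := Complex.ofReal_ne_zero.2 Real.pi_ne_zero
  by_cases hsin : Complex.sin (Real.pi * s) = 0
  · rw [hsin, div_zero, mul_eq_zero, or_iff_left hΓ] at hreflection
    rw [hreflection, hsin, inv_zero, mul_zero, zero_div]
  · rw [eq_div_iff hsin, mul_assoc] at hreflection
    exact inv_eq_of_mul_eq_one_right (by rw [mul_div_assoc', hreflection, div_self hπ])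

lemma exists_norm_inv_Gamma_le_of_lt_one {β : ℝ} (α : ℝ) (hβ : β < 1) :
    ∃ C, 0 ≤ C ∧ ∀ s : ℂ, s.re ∈ Icc α β →
      ‖(Complex.Gamma s)⁻¹‖ ≤ C * Real.exp (Real.pi * |s.im|) := by
  obtain ⟨C, hC⟩ := exists_norm_Gamma_le (sub_pos.2 hβ) (1 - α)
  refine ⟨|C| / Real.pi, by positivity, fun s hs => ?_⟩
  have hΓ : ‖Complex.Gamma (1 - s)‖ ≤ |C| :=
    (hC _ (by simpa using ⟨by linarith [hs.2], by linarith [hs.1]⟩)).trans (le_abs_self C)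
  have hsin : ‖Complex.sin (Real.pi * s)‖ ≤ Real.exp (Real.pi * |s.im|) := by
    simpa [abs_mul, abs_of_pos Real.pi_pos] using norm_sin_le_exp_abs_im (Real.pi * s)
  rw [inv_Gamma_eq_Gamma_one_sub_mul_sin (hs.2.trans_lt hβ), norm_div, norm_mul, Complex.norm_real,
    Real.norm_of_nonneg Real.pi_pos.le, div_mul_eq_mul_div]
  gcongr

lemma norm_inv_Gamma_add_natCast_le {s : ℂ} (hs : 1 ≤ |s.im|) (n : ℕ) :
    ‖(Complex.Gamma (s + n))⁻¹‖ ≤ ‖(Complex.Gamma s)⁻¹‖ := by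
  induction n with
  | zero => simp
  | succ n ih =>
    have hone : 1 ≤ ‖s + n‖ := hs.trans (by simpa using Complex.abs_im_le_norm (s + n))
    have hne : s + n ≠ 0 := norm_ne_zero_iff.1 (zero_lt_one.trans_le hone).ne'
    rw [Nat.cast_succ, ← add_assoc, Complex.Gamma_add_one _ hne, mul_inv, norm_mul, norm_inv]
    exact (mul_le_of_le_one_left (norm_nonneg _) (inv_le_one_of_one_le₀ hone)).trans ih

lemma exists_norm_inv_Gamma_le (α β : ℝ) :
    ∃ C, ∀ s : ℂ, s.re ∈ Icc α β →
      ‖(Complex.Gamma s)⁻¹‖ ≤ C * Real.exp (Real.pi * |s.im|) := by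
  obtain ⟨n, hn⟩ := exists_nat_gt β
  obtain ⟨C₁, hC₁, hfar⟩ :=
    exists_norm_inv_Gamma_le_of_lt_one (β := β - n) (α - n) (by linarith)
  obtain ⟨C₂, hnear⟩ := ((isCompact_Icc (a := α) (b := β)).reProdIm
    (isCompact_Icc (a := -1) (b := 1))).exists_bound_of_continuousOn
      Complex.differentiable_one_div_Gamma.continuous.continuousOn
  refine ⟨C₁ + |C₂|, fun s hs => ?_⟩
  obtain him | him := le_total 1 |s.im|
  · calc ‖(Complex.Gamma s)⁻¹‖ = ‖(Complex.Gamma (s - n + n))⁻¹‖ := by rw [sub_add_cancel]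
      _ ≤ ‖(Complex.Gamma (s - n))⁻¹‖ := norm_inv_Gamma_add_natCast_le (by simpa using him) n
      _ ≤ C₁ * Real.exp (Real.pi * |s.im|) := by
          simpa using hfar (s - n) (by constructor <;> simp [hs.1, hs.2])
      _ ≤ (C₁ + |C₂|) * Real.exp (Real.pi * |s.im|) := by
          gcongr
          exact le_add_of_nonneg_right (abs_nonneg _)
  · calc ‖(Complex.Gamma s)⁻¹‖ ≤ C₂ := hnear s (Complex.mem_reProdIm.2 ⟨hs, abs_le.1 him⟩)
      _ ≤ (C₁ + |C₂|) * 1 := by linarith [le_abs_self C₂]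
      _ ≤ (C₁ + |C₂|) * Real.exp (Real.pi * |s.im|) := by
          gcongr
          exact Real.one_le_exp (by positivity)

variable {ι κ : Type*} [Fintype ι] [Fintype κ] {A a : ι → ℝ} {B b : κ → ℝ} {ρ : ℝ}

lemma mul_re_add_mem_Icc {A c c' : ℝ} {s : ℂ} (hA : 0 < A) (a : ℝ) (hs : s.re ∈ Icc c c') :
    ((A : ℂ) * s + a).re ∈ Icc (A * c + a) (A * c' + a) := by
  rw [Complex.add_re, Complex.re_ofReal_mul, Complex.ofReal_re]
  constructor <;> gcongr
  exacts [hs.1, hs.2]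

lemma exists_norm_gammaProd_le {c : ℝ} (hA : ∀ k, 0 < A k) (hpos : ∀ k, 0 < A k * c + a k)
    (c' : ℝ) : ∃ C, 0 ≤ C ∧ ∀ s : ℂ, s.re ∈ Icc c c' → ‖gammaProd A a s‖ ≤ C := by
  choose C hC using fun k => exists_norm_Gamma_le (hpos k) (A k * c' + a k)
  refine ⟨∏ k, |C k|, by positivity, fun s hs => ?_⟩
  rw [gammaProd, norm_prod]
  gcongr with k
  exact (hC k _ (mul_re_add_mem_Icc (hA k) (a k) hs)).trans (le_abs_self _)

lemma exists_norm_inv_gammaProd_le (hB : ∀ j, 0 < B j) (b : κ → ℝ) (c c' : ℝ) :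
    ∃ C D, ∀ s : ℂ, s.re ∈ Icc c c' →
      ‖(gammaProd B b s)⁻¹‖ ≤ C * Real.exp (D * |s.im|) := by
  choose C hC using fun j => exists_norm_inv_Gamma_le (B j * c + b j) (B j * c' + b j)
  refine ⟨∏ j, C j, ∑ j, Real.pi * B j, fun s hs => ?_⟩
  rw [gammaProd, ← Finset.prod_inv_distrib, norm_prod, Finset.sum_mul, Real.exp_sum,
    ← Finset.prod_mul_distrib]
  gcongr with j
  simpa [abs_mul, abs_of_pos (hB j), mul_assoc] using
    hC j _ (mul_re_add_mem_Icc (hB j) (b j) hs)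

theorem exists_norm_gammaQuotient_le {c : ℝ} (hA : ∀ k, 0 < A k) (hB : ∀ j, 0 < B j)
    (hpos : ∀ k, 0 < A k * c + a k) (hρ : 0 < ρ) (b : κ → ℝ) (c' : ℝ) :
    ∃ C D, ∀ s : ℂ, s.re ∈ Icc c c' →
      ‖gammaProd A a s / gammaProd B b s * (ρ : ℂ) ^ (-s)‖ ≤ C * Real.exp (D * |s.im|) := by
  obtain ⟨C₁, hC₁, hnum⟩ := exists_norm_gammaProd_le hA hpos c'
  obtain ⟨C₂, D, hden⟩ := exists_norm_inv_gammaProd_le hB b c c'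
  have hcont : ContinuousOn (fun σ => ρ ^ (-σ)) (Icc c c') :=
    (continuous_const.rpow continuous_neg fun _ => Or.inl hρ.ne').continuousOn
  obtain ⟨C₃, hpow⟩ := isCompact_Icc.exists_bound_of_continuousOn hcont
  refine ⟨C₁ * C₂ * |C₃|, D, fun s hs => ?_⟩
  have hρs : ‖(ρ : ℂ) ^ (-s)‖ ≤ |C₃| := by
    rw [Complex.norm_cpow_eq_rpow_re_of_pos hρ]
    exact (le_abs_self _).trans ((hpow s.re hs).trans (le_abs_self _))
  calc ‖gammaProd A a s / gammaProd B b s * (ρ : ℂ) ^ (-s)‖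
      = ‖gammaProd A a s‖ * ‖(gammaProd B b s)⁻¹‖ * ‖(ρ : ℂ) ^ (-s)‖ := by
        rw [div_eq_mul_inv, norm_mul, norm_mul]
    _ ≤ C₁ * (C₂ * Real.exp (D * |s.im|)) * |C₃| := by
        have := hnum s hs
        have := hden s hs
        gcongr
        exact mul_nonneg hC₁ ((norm_nonneg _).trans this)
    _ = C₁ * C₂ * |C₃| * Real.exp (D * |s.im|) := by ring

end GammaGrowth

section GaussianSummability

variable {f : ℝ → ℂ}

lemma hasDerivAt_integral_neg_self (hf : Continuous f) (R : ℝ) :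
    HasDerivAt (fun R => ∫ t in -R..R, f t) (f R + f (-R)) R := by
  have hprim (x : ℝ) : HasDerivAt (fun u => ∫ t in 0..u, f t) (f x) x :=
    hf.integral_hasStrictDerivAt 0 x |>.hasDerivAt
  have hneg : HasDerivAt (fun u => ∫ t in 0..-u, f t) (-f (-R)) R := by
    simpa only [neg_one_smul] using! (hprim (-R)).scomp R (hasDerivAt_neg R)
  rw [← sub_neg_eq_add]
  refine ((hprim R).sub hneg).congr_of_eventuallyEq (Eventually.of_forall fun u => ?_)
  exact (intervalIntegral.integral_interval_sub_left (hf.intervalIntegrable _ _)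
    (hf.intervalIntegrable _ _)).symm

lemma integral_eq_integral_Ioi_add_comp_neg (hf : Integrable f) :
    ∫ t, f t = ∫ t in Ioi 0, (f t + f (-t)) := by
  rw [integral_add hf.integrableOn hf.comp_neg.integrableOn, integral_comp_neg_Ioi, neg_zero,
    add_comm, intervalIntegral.integral_Iic_add_Ioi hf.integrableOn hf.integrableOn]

lemma hasDerivAt_exp_neg_sq (r : ℝ) :
    HasDerivAt (fun r : ℝ => (Real.exp (-r ^ 2) : ℂ)) (-(2 * r * Real.exp (-r ^ 2) : ℝ)) r := by
  refine (((hasDerivAt_pow 2 r).fun_neg.exp).ofReal_comp).congr_deriv ?_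
  push_cast
  ring

lemma integrableOn_Ioi_mul_exp_neg_sq :
    IntegrableOn (fun r => 2 * r * Real.exp (-r ^ 2)) (Ioi 0) := by
  simpa [mul_assoc] using ((integrable_mul_exp_neg_mul_sq one_pos).const_mul 2).integrableOn

lemma integral_Ioi_mul_exp_neg_sq : ∫ r in Ioi 0, 2 * r * Real.exp (-r ^ 2) = 1 := by
  have hlim : Tendsto (fun r : ℝ => -Real.exp (-r ^ 2)) atTop (𝓝 0) := by
    simpa using (Real.tendsto_exp_neg_atTop_nhds_zero.comp (tendsto_pow_atTop two_ne_zero)).neg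
  rw [integral_Ioi_of_hasDerivAt_of_tendsto' (f := fun r : ℝ => -Real.exp (-r ^ 2)) (m := 0)
    (fun r _ => ?_) integrableOn_Ioi_mul_exp_neg_sq hlim]
  · simp
  · refine ((hasDerivAt_pow 2 r).fun_neg.exp).fun_neg.congr_deriv ?_
    simp [mul_comm]

lemma integral_mul_exp_neg_sq_eq {M : ℝ} (hf : Continuous f)
    (hint : Integrable fun t => f t * (Real.exp (-t ^ 2) : ℂ))
    (hM : ∀ R, 0 < R → ‖∫ t in -R..R, f t‖ ≤ M) :
    ∫ t, f t * (Real.exp (-t ^ 2) : ℂ) =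
      ∫ r in Ioi 0, (∫ t in -r..r, f t) * ((2 * r * Real.exp (-r ^ 2) : ℝ) : ℂ) := by
  let S (R : ℝ) : ℂ := ∫ t in -R..R, f t
  let g (r : ℝ) : ℂ := (Real.exp (-r ^ 2) : ℂ)
  have hS_deriv := hasDerivAt_integral_neg_self hf
  have hS_cont : Continuous S := continuous_iff_continuousAt.2 fun R => (hS_deriv R).continuousAt
  have hSg_cont : Continuous (S * g) := hS_cont.mul (by fun_prop)
  have hSg_zero : Tendsto (S * g) (𝓝[>] 0) (𝓝 0) := by
    simpa [S] using (hSg_cont.tendsto 0).mono_left nhdsWithin_le_nhds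
  have hSg_atTop : Tendsto (S * g) atTop (𝓝 0) := by
    have hg : Tendsto (fun r : ℝ => Real.exp (-r ^ 2)) atTop (𝓝 0) :=
      Real.tendsto_exp_neg_atTop_nhds_zero.comp (tendsto_pow_atTop two_ne_zero)
    refine squeeze_zero_norm' ?_ (by simpa only [mul_zero] using hg.const_mul M)
    filter_upwards [eventually_gt_atTop 0] with R hR
    rw [Pi.mul_apply, norm_mul, Complex.norm_real, Real.norm_of_nonneg (Real.exp_pos _).le]
    gcongr
    exact hM R hR
  have hSg'_int : IntegrableOn (S * fun r => -((2 * r * Real.exp (-r ^ 2) : ℝ) : ℂ)) (Ioi 0) :=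
    integrableOn_Ioi_mul_exp_neg_sq.ofReal.neg.bdd_mul hS_cont.aestronglyMeasurable
      (ae_restrict_of_forall_mem measurableSet_Ioi hM)
  have hsymm : (fun r => f r * (Real.exp (-r ^ 2) : ℂ) + f (-r) * (Real.exp (-(-r) ^ 2) : ℂ)) =
      (fun r => f r + f (-r)) * g := by
    ext r
    rw [neg_sq, ← add_mul, Pi.mul_apply]
  have hS'g_int : IntegrableOn ((fun r => f r + f (-r)) * g) (Ioi 0) := by
    rw [← hsymm]
    exact (hint.add hint.comp_neg).integrableOn
  have hparts := integral_Ioi_mul_deriv_eq_deriv_mul (fun r _ => hS_deriv r)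
    (fun r _ => hasDerivAt_exp_neg_sq r) hSg'_int hS'g_int hSg_zero hSg_atTop
  rw [integral_eq_integral_Ioi_add_comp_neg hint, hsymm]
  simp only [mul_neg, integral_neg, sub_zero, zero_sub, neg_inj] at hparts
  exact hparts.symm

lemma exists_norm_le_of_tendsto_atTop {ℓ : ℂ} (hf : Continuous f) (hlim : Tendsto f atTop (𝓝 ℓ)) :
    ∃ M, ∀ R, 0 < R → ‖f R‖ ≤ M := by
  obtain ⟨R₀, hR₀⟩ := eventually_atTop.1 (hlim.norm.eventually (gt_mem_nhds (lt_add_one ‖ℓ‖)))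
  obtain ⟨M, hM⟩ := (isCompact_Icc (a := 0) (b := R₀)).exists_bound_of_continuousOn hf.continuousOn
  refine ⟨max M (‖ℓ‖ + 1), fun R hR => ?_⟩
  obtain h | h := le_total R₀ R
  exacts [le_max_of_le_right (hR₀ R h).le, le_max_of_le_left (hM R ⟨hR.le, h⟩)]

lemma integral_mul_exp_neg_div_sq_eq {M T : ℝ} (hT : 0 < T) (hf : Continuous f)
    (hint : Integrable fun t => f t * (Real.exp (-(t / T) ^ 2) : ℂ))
    (hM : ∀ R, 0 < R → ‖∫ t in -R..R, f t‖ ≤ M) :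
    ∫ t, f t * (Real.exp (-(t / T) ^ 2) : ℂ) =
      ∫ r in Ioi 0, (∫ t in -(T * r)..T * r, f t) * ((2 * r * Real.exp (-r ^ 2) : ℝ) : ℂ) := by
  have hscale (r : ℝ) : ∫ t in -r..r, (T : ℂ) * f (T * t) = ∫ t in -(T * r)..T * r, f t := by
    rw [intervalIntegral.integral_const_mul, ← Complex.real_smul,
      intervalIntegral.smul_integral_comp_mul_left, mul_neg]
  have hcomp (r : ℝ) : (T : ℂ) * f (T * r) * (Real.exp (-r ^ 2) : ℂ) =
      (T : ℂ) * (f (T * r) * (Real.exp (-(T * r / T) ^ 2) : ℂ)) := by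
    rw [mul_div_cancel_left₀ _ hT.ne', mul_assoc]
  have hunit := integral_mul_exp_neg_sq_eq (f := fun t => (T : ℂ) * f (T * t)) (M := M)
    (by fun_prop)
    (by simpa only [hcomp] using (hint.comp_mul_left' hT.ne').const_mul (T : ℂ))
    (fun R hR => by simpa only [hscale] using hM (T * R) (mul_pos hT hR))
  simp only [hscale, hcomp, integral_const_mul] at hunit
  rw [← hunit, Measure.integral_comp_mul_left (fun t => f t * (Real.exp (-(t / T) ^ 2) : ℂ)),
    abs_of_pos (inv_pos.2 hT), Complex.real_smul, ← mul_assoc, ← Complex.ofReal_mul,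
    mul_inv_cancel₀ hT.ne', Complex.ofReal_one, one_mul]

theorem tendsto_integral_mul_exp_neg_div_sq {ℓ : ℂ} (hf : Continuous f)
    (hint : ∀ T, 0 < T → Integrable fun t => f t * (Real.exp (-(t / T) ^ 2) : ℂ))
    (hlim : Tendsto (fun R => ∫ t in -R..R, f t) atTop (𝓝 ℓ)) :
    Tendsto (fun T : ℝ => ∫ t, f t * (Real.exp (-(t / T) ^ 2) : ℂ)) atTop (𝓝 ℓ) := by
  have hcont : Continuous fun R => ∫ t in -R..R, f t :=
    continuous_iff_continuousAt.2 fun R => (hasDerivAt_integral_neg_self hf R).continuousAt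
  obtain ⟨M, hM⟩ := exists_norm_le_of_tendsto_atTop hcont hlim
  have hmass : ∫ r in Ioi (0 : ℝ), ℓ * ((2 * r * Real.exp (-r ^ 2) : ℝ) : ℂ) = ℓ := by
    rw [integral_const_mul, integral_complex_ofReal, integral_Ioi_mul_exp_neg_sq,
      Complex.ofReal_one, mul_one]
  have hdom : Tendsto (fun T : ℝ => ∫ r in Ioi 0,
      (∫ t in -(T * r)..T * r, f t) * ((2 * r * Real.exp (-r ^ 2) : ℝ) : ℂ)) atTop (𝓝 ℓ) := by
    rw [← hmass]
    refine tendsto_integral_filter_of_dominated_convergence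
      (fun r => M * (2 * r * Real.exp (-r ^ 2))) ?_ ?_
      (integrableOn_Ioi_mul_exp_neg_sq.const_mul M) ?_
    · exact Eventually.of_forall fun T =>
        ((hcont.comp (continuous_const_mul T)).mul (by fun_prop)).aestronglyMeasurable
    · filter_upwards [eventually_gt_atTop 0] with T hT
      refine ae_restrict_of_forall_mem measurableSet_Ioi fun r (hr : 0 < r) => ?_
      rw [norm_mul, Complex.norm_real, Real.norm_of_nonneg (by positivity)]
      gcongr
      exact hM _ (mul_pos hT hr)
    · exact ae_restrict_of_forall_mem measurableSet_Ioi fun r hr =>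
        (hlim.comp (tendsto_id.atTop_mul_const hr)).mul_const _
  refine hdom.congr' ?_
  filter_upwards [eventually_gt_atTop 0] with T hT
  exact (integral_mul_exp_neg_div_sq_eq hT hf (hint T hT) hM).symm

end GaussianSummability

section VerticalLines

variable {F : ℂ → ℂ} {c c' C δ : ℝ}

lemma continuous_comp_vertical {σ : ℝ} (hF : ∀ s : ℂ, s.re = σ → DifferentiableAt ℂ F s) :
    Continuous fun t : ℝ => F (σ + t * Complex.I) :=
  continuous_iff_continuousAt.2 fun t =>
    ContinuousAt.comp (f := fun t : ℝ => (σ : ℂ) + t * Complex.I) (hF _ (by simp)).continuousAt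
      (Continuous.continuousAt (by fun_prop))

lemma integrable_comp_vertical (hδ : 0 < δ) {σ : ℝ}
    (hF : ∀ s : ℂ, s.re = σ → DifferentiableAt ℂ F s)
    (hbound : ∀ s : ℂ, s.re = σ → ‖F s‖ ≤ C * Real.exp (-δ * s.im ^ 2)) :
    Integrable fun t : ℝ => F (σ + t * Complex.I) :=
  ((integrable_exp_neg_mul_sq hδ).const_mul C).mono'
    (continuous_comp_vertical hF).aestronglyMeasurable
    (Eventually.of_forall fun t => by simpa using hbound (σ + t * Complex.I) (by simp))

lemma tendsto_integral_horizontal (hcc : c ≤ c') (hδ : 0 < δ)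
    (hbound : ∀ s : ℂ, s.re ∈ Icc c c' → ‖F s‖ ≤ C * Real.exp (-δ * s.im ^ 2)) {y : ℝ → ℝ}
    (hy : ∀ T, y T ^ 2 = T ^ 2) :
    Tendsto (fun T : ℝ => ∫ x in c..c', F (x + y T * Complex.I)) atTop (𝓝 0) := by
  have hdecay : Tendsto (fun T : ℝ => C * Real.exp (-δ * T ^ 2) * |c' - c|) atTop (𝓝 0) := by
    have hexp : Tendsto (fun T : ℝ => Real.exp (-δ * T ^ 2)) atTop (𝓝 0) :=
      Real.tendsto_exp_atBot.comp
        ((tendsto_pow_atTop two_ne_zero).const_mul_atTop_of_neg (neg_neg_of_pos hδ))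
    simpa using (hexp.const_mul C).mul_const |c' - c|
  refine squeeze_zero_norm (fun T => ?_) hdecay
  refine intervalIntegral.norm_integral_le_of_norm_le_const fun x hx => ?_
  rw [uIoc_of_le hcc] at hx
  simpa [hy] using hbound (x + y T * Complex.I) (by simpa using ⟨hx.1.le, hx.2⟩)

theorem integral_vertical_eq (hcc : c ≤ c') (hδ : 0 < δ)
    (hF : ∀ s : ℂ, s.re ∈ Icc c c' → DifferentiableAt ℂ F s)
    (hbound : ∀ s : ℂ, s.re ∈ Icc c c' → ‖F s‖ ≤ C * Real.exp (-δ * s.im ^ 2)) :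
    ∫ t : ℝ, F (c + t * Complex.I) = ∫ t : ℝ, F (c' + t * Complex.I) := by
  have htrunc {σ : ℝ} (hσ : σ ∈ Icc c c') : Tendsto (fun T => ∫ t in -T..T, F (σ + t * Complex.I))
      atTop (𝓝 (∫ t : ℝ, F (σ + t * Complex.I))) :=
    intervalIntegral_tendsto_integral
      (integrable_comp_vertical hδ (fun s hs => hF s (hs ▸ hσ)) fun s hs => hbound s (hs ▸ hσ))
      tendsto_neg_atTop_atBot tendsto_id
  have hrect (T : ℝ) : (∫ x in c..c', F (x + (-T : ℝ) * Complex.I))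
        - (∫ x in c..c', F (x + T * Complex.I))
        + Complex.I • (∫ t in -T..T, F (c' + t * Complex.I))
        - Complex.I • (∫ t in -T..T, F (c + t * Complex.I)) = 0 := by
    have hdiff : DifferentiableOn ℂ F (uIcc c c' ×ℂ uIcc (-T) T) := fun s hs =>
      (hF s (uIcc_of_le hcc ▸ (Complex.mem_reProdIm.1 hs).1)).differentiableWithinAt
    simpa using Complex.integral_boundary_rect_eq_zero_of_differentiableOn F
      (c + (-T : ℝ) * Complex.I) (c' + T * Complex.I) (by simpa using hdiff)
  have hlim := (((tendsto_integral_horizontal hcc hδ hbound neg_sq).sub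
    (tendsto_integral_horizontal hcc hδ hbound fun _ => rfl)).add
    ((htrunc (right_mem_Icc.2 hcc)).const_smul Complex.I)).sub
    ((htrunc (left_mem_Icc.2 hcc)).const_smul Complex.I)
  simp only [hrect] at hlim
  have hzero := tendsto_nhds_unique hlim tendsto_const_nhds
  rw [sub_zero, zero_add, ← smul_sub, smul_eq_zero_iff_right Complex.I_ne_zero,
    sub_eq_zero] at hzero
  exact hzero.symm

end VerticalLines

section GaussianRegularization

variable {c c' w T : ℝ}

lemma exists_norm_mul_exp_sq_le {F : ℂ → ℂ} {C D : ℝ} (hT : T ≠ 0)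
    (hbound : ∀ s : ℂ, s.re ∈ Icc c c' → ‖F s‖ ≤ C * Real.exp (D * |s.im|)) :
    ∃ C', ∀ s : ℂ, s.re ∈ Icc c c' →
      ‖F s * Complex.exp (((s - c) / T) ^ 2)‖ ≤ C' * Real.exp (-(1 / (2 * T ^ 2)) * s.im ^ 2) := by
  refine ⟨C * Real.exp (((c' - c) / T) ^ 2 + (D * T) ^ 2 / 2), fun s hs => ?_⟩
  have hC : 0 ≤ C :=
    nonneg_of_mul_nonneg_left ((norm_nonneg _).trans (hbound s hs)) (Real.exp_pos _)
  have hre : ((((s - c) / T) ^ 2 : ℂ)).re = ((s.re - c) / T) ^ 2 - (|s.im| / T) ^ 2 := by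
    rw [sq, Complex.mul_re, Complex.div_ofReal_re, Complex.div_ofReal_im, div_pow |s.im|, sq_abs]
    simp only [Complex.sub_re, Complex.sub_im, Complex.ofReal_re, Complex.ofReal_im, sub_zero]
    ring
  have hsq : ((s.re - c) / T) ^ 2 ≤ ((c' - c) / T) ^ 2 := by
    rw [div_pow, div_pow]
    have := sub_nonneg.2 hs.1
    gcongr
    exact hs.2
  have hcross : D * T * (|s.im| / T) = D * |s.im| := by field_simp
  have hhalf : 1 / (2 * T ^ 2) * s.im ^ 2 = (|s.im| / T) ^ 2 / 2 := by
    rw [div_pow, sq_abs]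
    ring
  calc ‖F s * Complex.exp (((s - c) / T) ^ 2)‖
      ≤ C * Real.exp (D * |s.im|) * Real.exp (((s.re - c) / T) ^ 2 - (|s.im| / T) ^ 2) := by
        rw [norm_mul, Complex.norm_exp, hre]
        gcongr
        exact hbound s hs
    _ ≤ _ := by
        rw [mul_assoc, mul_assoc, ← Real.exp_add, ← Real.exp_add]
        refine mul_le_mul_of_nonneg_left (Real.exp_le_exp.2 ?_) hC
        linarith [sq_nonneg (D * T - |s.im| / T)]

lemma exp_mul_exp_sq_eq_exp_quadratic (u t : ℝ) :
    Complex.exp ((c' + t * Complex.I) * u) * Complex.exp (((c' + t * Complex.I - c) / T) ^ 2) =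
      Complex.exp (-(T ^ 2 : ℂ)⁻¹ * t ^ 2 + Complex.I * (u + 2 * (c' - c) / T ^ 2) * t
        + (c' * u + (c' - c) ^ 2 / T ^ 2)) := by
  rw [← Complex.exp_add]
  congr 1
  linear_combination (t ^ 2 / T ^ 2 : ℂ) * Complex.I_sq

lemma integrable_exp_mul_exp_sq (hT : T ≠ 0) (u : ℝ) :
    Integrable fun t : ℝ => Complex.exp ((c' + t * Complex.I) * u) *
      Complex.exp (((c' + t * Complex.I - c) / T) ^ 2) := by
  simp only [exp_mul_exp_sq_eq_exp_quadratic]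
  refine integrable_cexp_quadratic ?_ _ _
  rw [← Complex.ofReal_pow, ← Complex.ofReal_inv, Complex.ofReal_re]
  positivity

lemma integral_exp_mul_exp_sq (hT : 0 < T) (u : ℝ) :
    ∫ t : ℝ, Complex.exp ((c' + t * Complex.I) * u) *
        Complex.exp (((c' + t * Complex.I - c) / T) ^ 2) =
      (T * √Real.pi * (Real.exp (c * u) * Real.exp (-(T / 2 * u) ^ 2)) : ℝ) := by
  have hT' : (T : ℂ) ≠ 0 := by exact_mod_cast hT.ne'
  have hre : (-(T ^ 2 : ℂ)⁻¹).re < 0 := by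
    rw [Complex.neg_re, ← Complex.ofReal_pow, ← Complex.ofReal_inv, Complex.ofReal_re]
    exact neg_neg_of_pos (by positivity)
  have hroot : ((Real.pi / -(-(T ^ 2 : ℂ)⁻¹) : ℂ)) ^ (1 / 2 : ℂ) = (T * √Real.pi : ℝ) := by
    have hsqrt : √(Real.pi * T ^ 2) = T * √Real.pi := by
      rw [Real.sqrt_mul Real.pi_nonneg, Real.sqrt_sq hT.le, mul_comm]
    rw [← hsqrt, Real.sqrt_eq_rpow, Complex.ofReal_cpow (by positivity)]
    simp
  have hexponent : (c' * u + (c' - c) ^ 2 / T ^ 2 : ℂ)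
      - (Complex.I * (u + 2 * (c' - c) / T ^ 2)) ^ 2 / (4 * -(T ^ 2 : ℂ)⁻¹)
      = (c * u + -(T / 2 * u) ^ 2 : ℝ) := by
    rw [mul_pow, Complex.I_sq]
    push_cast
    field_simp
    ring
  simp only [exp_mul_exp_sq_eq_exp_quadratic]
  rw [integral_cexp_quadratic hre, hroot, hexponent, ← Real.exp_add, ← Complex.ofReal_exp,
    ← Complex.ofReal_mul]

lemma integrable_exp_neg_mul_mul_exp_sq {k : ℝ → ℂ} (hT : 0 < T) (hk : LaplaceConverges k c') :
    Integrable (Function.uncurry fun t v : ℝ =>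
      Complex.exp (-((c' + t * Complex.I) * v)) * k v * Complex.exp ((c' + t * Complex.I) * w) *
        Complex.exp (((c' + t * Complex.I - c) / T) ^ 2))
      (volume.prod (volume.restrict (Ioi 0))) := by
  have hfactor (t v : ℝ) : Complex.exp (-((c' + t * Complex.I) * v)) * k v *
        Complex.exp ((c' + t * Complex.I) * w) * Complex.exp (((c' + t * Complex.I - c) / T) ^ 2) =
      Complex.exp ((c' + t * Complex.I) * w) * Complex.exp (((c' + t * Complex.I - c) / T) ^ 2) *
        (Complex.exp (-(c' * v)) * k v) * Complex.exp ((-(t * v) : ℝ) * Complex.I) := by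
    have hexp : Complex.exp (-((c' + t * Complex.I) * v)) =
        Complex.exp (-(c' * v)) * Complex.exp ((-(t * v) : ℝ) * Complex.I) := by
      rw [← Complex.exp_add]
      congr 1
      push_cast
      ring
    rw [hexp]
    ring
  simp only [Function.uncurry_def, hfactor]
  have hprod := (integrable_exp_mul_exp_sq (c := c) (c' := c') hT.ne' w).mul_prod hk
  refine hprod.mul_bdd (c := 1) (Continuous.aestronglyMeasurable (by fun_prop))
    (Eventually.of_forall fun z => ?_)
  rw [Complex.norm_exp_ofReal_mul_I]

lemma integral_laplace_mul_exp_sq {k : ℝ → ℂ} (hT : 0 < T) (hk : LaplaceConverges k c') :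
    ∫ t : ℝ, laplace k (c' + t * Complex.I) * Complex.exp ((c' + t * Complex.I) * w) *
        Complex.exp (((c' + t * Complex.I - c) / T) ^ 2) =
      (T * √Real.pi : ℝ) *
        ∫ v in Ioi 0, k v * (Real.exp (c * (w - v)) * Real.exp (-(T / 2 * (w - v)) ^ 2) : ℝ) := by
  have hinner (v : ℝ) : ∫ t : ℝ, Complex.exp (-((c' + t * Complex.I) * v)) * k v *
        Complex.exp ((c' + t * Complex.I) * w) * Complex.exp (((c' + t * Complex.I - c) / T) ^ 2) =
      (T * √Real.pi : ℝ) *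
        (k v * (Real.exp (c * (w - v)) * Real.exp (-(T / 2 * (w - v)) ^ 2) : ℝ)) := by
    calc _ = k v * ∫ t : ℝ, Complex.exp ((c' + t * Complex.I) * (w - v : ℝ)) *
        Complex.exp (((c' + t * Complex.I - c) / T) ^ 2) := by
          rw [← integral_const_mul]
          refine integral_congr_ae (Eventually.of_forall fun t => ?_)
          beta_reduce
          rw [Complex.ofReal_sub, mul_sub, sub_eq_add_neg (_ * (w : ℂ)), Complex.exp_add]
          ring
      _ = _ := by
          rw [integral_exp_mul_exp_sq hT]
          push_cast
          ring
  simp only [laplace, ← integral_mul_const, ← integral_const_mul]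
  rw [integral_integral_swap (integrable_exp_neg_mul_mul_exp_sq hT hk)]
  exact integral_congr_ae (Eventually.of_forall hinner)

lemma tendsto_sqrt_mul_integral_mul_gaussian {f : ℝ → ℂ} (hf : Integrable f)
    (hfw : ContinuousAt f w) :
    Tendsto (fun r : ℝ => (√(r / Real.pi) : ℂ) *
      ∫ v, f v * (Real.exp (-(r * (w - v) ^ 2)) : ℂ)) atTop (𝓝 (f w)) := by
  refine ((Real.tendsto_integral_gaussian_smul' hf hfw).comp
    (tendsto_id.atTop_div_const (sq_pos_of_pos Real.pi_pos))).congr' ?_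
  filter_upwards [eventually_ge_atTop 0] with r hr
  have hroot : (Real.pi * (r / Real.pi ^ 2 : ℝ) : ℂ) ^ (Module.finrank ℝ ℝ / 2 : ℂ) =
      √(r / Real.pi) := by
    rw [Real.sqrt_eq_rpow, Complex.ofReal_cpow (by positivity)]
    congr 1
    · push_cast
      field_simp
    · simp
  have hexp (v : ℝ) : (-Real.pi ^ 2 * (r / Real.pi ^ 2 : ℝ) * ‖w - v‖ ^ 2 : ℂ) =
      (-(r * (w - v) ^ 2) : ℝ) := by
    rw [← Complex.ofReal_pow ‖w - v‖, Real.norm_eq_abs, sq_abs]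
    push_cast
    field_simp
  simp only [Function.comp_apply, id, hroot, hexp, smul_eq_mul, ← Complex.ofReal_exp]
  simp only [mul_assoc, integral_const_mul, mul_comm (f _)]

-- One unit of the Gaussian is kept as part of the integrand: `g` itself need not be integrable.
lemma tendsto_integral_mul_gaussian {g : ℝ → ℂ}
    (hg : Integrable fun v => g v * (Real.exp (-(w - v) ^ 2) : ℂ)) (hgw : ContinuousAt g w) :
    Tendsto (fun T : ℝ => (T / √Real.pi : ℝ) *
      ∫ v, g v * (Real.exp (-(T * (w - v)) ^ 2) : ℂ)) atTop (𝓝 (g w)) := by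
  have hscale : Tendsto (fun T : ℝ => T ^ 2 - 1) atTop atTop :=
    tendsto_atTop_add_const_right _ (-1) (tendsto_pow_atTop two_ne_zero)
  have hlim := (tendsto_sqrt_mul_integral_mul_gaussian hg
    (hgw.mul (Continuous.continuousAt (by fun_prop)))).comp hscale
  have hratio : Tendsto (fun T : ℝ => (√(1 - 1 / T ^ 2))⁻¹) atTop (𝓝 1) := by
    have hinv : Tendsto (fun T : ℝ => 1 / T ^ 2) atTop (𝓝 0) :=
      tendsto_const_nhds.div_atTop (tendsto_pow_atTop two_ne_zero)
    simpa using (hinv.const_sub 1).sqrt.inv₀ (by simp)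
  have hprod := ((Complex.continuous_ofReal.tendsto 1).comp hratio).mul hlim
  simp only [sub_self, ne_eq, OfNat.ofNat_ne_zero, not_false_eq_true, zero_pow, neg_zero,
    Real.exp_zero, Complex.ofReal_one, mul_one, one_mul] at hprod
  refine hprod.congr' ?_
  filter_upwards [eventually_gt_atTop 1] with T hT
  have hT0 : 0 < T := one_pos.trans hT
  have hT' : 0 < T ^ 2 - 1 := sub_pos.2 (one_lt_pow₀ hT two_ne_zero)
  have hpre : (√(1 - 1 / T ^ 2))⁻¹ * √((T ^ 2 - 1) / Real.pi) = T / √Real.pi := by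
    have hsqrt : √(T ^ 2 - 1) ≠ 0 := (Real.sqrt_pos.2 hT').ne'
    rw [one_sub_div (by positivity), Real.sqrt_div hT'.le, Real.sqrt_div hT'.le,
      Real.sqrt_sq hT0.le]
    field_simp
  simp only [Function.comp_apply]
  rw [← mul_assoc, ← Complex.ofReal_mul, hpre]
  congr 2 with v
  rw [mul_assoc, ← Complex.ofReal_mul, ← Real.exp_add]
  congr 3
  ring

lemma LaplaceConverges.integrable_mul_exp_neg_sq {k : ℝ → ℂ} (hk : LaplaceConverges k c')
    (c w : ℝ) :
    Integrable fun v => (Ioi 0).indicator (fun v => k v * (Real.exp (c * (w - v)) : ℂ)) v *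
      (Real.exp (-(w - v) ^ 2) : ℂ) := by
  have hbdd := hk.mul_bdd (c := Real.exp (c' * w + (c - c') ^ 2 / 4))
    (g := fun v => (Real.exp (c' * v + c * (w - v) - (w - v) ^ 2) : ℂ))
    (Continuous.aestronglyMeasurable (by fun_prop)) (Eventually.of_forall fun v => by
      rw [Complex.norm_real, Real.norm_eq_abs, Real.abs_exp, Real.exp_le_exp]
      linarith [sq_nonneg (w - v + (c' - c) / 2)])
  have hint : IntegrableOn (fun v => k v * (Real.exp (c * (w - v)) : ℂ) *
      (Real.exp (-(w - v) ^ 2) : ℂ)) (Ioi 0) := by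
    refine hbdd.congr (Eventually.of_forall fun v => ?_)
    beta_reduce
    rw [mul_right_comm, mul_comm _ (k v), mul_assoc (k v)]
    congr 1
    simp only [Complex.ofReal_exp, ← Complex.exp_add]
    push_cast
    ring_nf
  exact (hint.integrable_indicator measurableSet_Ioi).congr
    (Eventually.of_forall fun v => indicator_mul_left _ _ _)

lemma exp_vertical_sub_div_sq (c T t : ℝ) :
    Complex.exp (((c + t * Complex.I - c) / T) ^ 2) = (Real.exp (-(t / T) ^ 2) : ℂ) := by
  rw [add_sub_cancel_left, div_pow, mul_pow, Complex.I_sq, Complex.ofReal_exp]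
  push_cast
  ring_nf

section Shift

variable {G : ℂ → ℂ} {C D : ℝ} (hT : T ≠ 0) (hcc : c ≤ c')
  (hG : ∀ s : ℂ, s.re ∈ Icc c c' → DifferentiableAt ℂ G s)
  (hbound : ∀ s : ℂ, s.re ∈ Icc c c' → ‖G s‖ ≤ C * Real.exp (D * |s.im|))

include hT hcc hG hbound

lemma integrable_vertical_mul_gaussian :
    Integrable fun t : ℝ => G (c + t * Complex.I) * (Real.exp (-(t / T) ^ 2) : ℂ) := by
  obtain ⟨C', hC'⟩ := exists_norm_mul_exp_sq_le hT hbound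
  have hc : ∀ s : ℂ, s.re = c → s.re ∈ Icc c c' := fun s hs => ⟨hs.ge, hs.trans_le hcc⟩
  simp only [← exp_vertical_sub_div_sq c]
  exact integrable_comp_vertical (F := fun s => G s * Complex.exp (((s - c) / T) ^ 2))
    (by positivity) (fun s hs => (hG s (hc s hs)).mul (by fun_prop)) fun s hs => hC' s (hc s hs)

lemma integral_vertical_mul_gaussian_eq :
    ∫ t : ℝ, G (c + t * Complex.I) * (Real.exp (-(t / T) ^ 2) : ℂ) =
      ∫ t : ℝ, G (c' + t * Complex.I) * Complex.exp (((c' + t * Complex.I - c) / T) ^ 2) := by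
  obtain ⟨C', hC'⟩ := exists_norm_mul_exp_sq_le hT hbound
  simp only [← exp_vertical_sub_div_sq c]
  exact integral_vertical_eq (F := fun s => G s * Complex.exp (((s - c) / T) ^ 2)) hcc
    (by positivity) (fun s hs => (hG s hs).mul (by fun_prop)) hC'

end Shift

lemma integral_vertical_laplace_mul_gaussian_eq {G : ℂ → ℂ} {k : ℝ → ℂ} {C D T : ℝ}
    (hT : 0 < T) (hcc : c ≤ c')
    (hG : ∀ s : ℂ, s.re ∈ Icc c c' → DifferentiableAt ℂ G s)
    (hbound : ∀ s : ℂ, s.re ∈ Icc c c' → ‖G s‖ ≤ C * Real.exp (D * |s.im|))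
    (hk : LaplaceConverges k c')
    (hGk : ∀ t : ℝ, G (c' + t * Complex.I) =
      laplace k (c' + t * Complex.I) * Complex.exp ((c' + t * Complex.I) * w)) :
    ∫ t : ℝ, G (c + t * Complex.I) * (Real.exp (-(t / T) ^ 2) : ℂ) =
      2 * Real.pi * ((T / 2 / √Real.pi : ℝ) * ∫ v,
        (Ioi 0).indicator (fun v => k v * (Real.exp (c * (w - v)) : ℂ)) v *
          (Real.exp (-(T / 2 * (w - v)) ^ 2) : ℂ)) := by
  rw [integral_vertical_mul_gaussian_eq hT.ne' hcc hG hbound]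
  simp only [hGk]
  rw [integral_laplace_mul_exp_sq hT hk, ← mul_assoc (2 * _ : ℂ), ← integral_indicator
    measurableSet_Ioi]
  congr 1
  · have hpi := Real.mul_self_sqrt Real.pi_nonneg
    norm_cast
    field_simp
    linarith
  · refine integral_congr_ae (Eventually.of_forall fun v => ?_)
    simp only [indicator, ite_mul, zero_mul, Complex.ofReal_mul, mul_assoc]

theorem eq_of_tendsto_integral_vertical {F : ℂ → ℂ} {k : ℝ → ℂ} {C D : ℝ} {ℓ : ℂ} (hcc : c ≤ c')
    (hF : ∀ s : ℂ, s.re ∈ Icc c c' → DifferentiableAt ℂ F s)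
    (hbound : ∀ s : ℂ, s.re ∈ Icc c c' → ‖F s‖ ≤ C * Real.exp (D * |s.im|))
    (hk : LaplaceConverges k c')
    (hFk : ∀ t : ℝ, F (c' + t * Complex.I) = laplace k (c' + t * Complex.I))
    (hw : 0 < w) (hkw : ContinuousAt k w)
    (hlim : Tendsto (fun R : ℝ => ∫ t in -R..R,
      F (c + t * Complex.I) * Complex.exp ((c + t * Complex.I) * w)) atTop (𝓝 ℓ)) :
    ℓ = 2 * Real.pi * k w := by
  set G : ℂ → ℂ := fun s => F s * Complex.exp (s * w)
  have hG : ∀ s : ℂ, s.re ∈ Icc c c' → DifferentiableAt ℂ G s := fun s hs =>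
    (hF s hs).mul (by fun_prop)
  have hGbound : ∀ s : ℂ, s.re ∈ Icc c c' →
      ‖G s‖ ≤ C * Real.exp (c' * w) * Real.exp (D * |s.im|) := fun s hs => by
    rw [norm_mul, Complex.norm_exp, Complex.re_mul_ofReal, mul_right_comm]
    exact mul_le_mul (hbound s hs)
      (Real.exp_le_exp.2 (mul_le_mul_of_nonneg_right hs.2 hw.le)) (Real.exp_pos _).le
      ((norm_nonneg _).trans (hbound s hs))
  set g : ℝ → ℂ := (Ioi 0).indicator fun v => k v * (Real.exp (c * (w - v)) : ℂ)
  have hgw : ContinuousAt g w :=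
    (hkw.mul (Continuous.continuousAt (by fun_prop))).congr
      ((eqOn_indicator (s := Ioi 0)).eventuallyEq_of_mem (Ioi_mem_nhds hw)).symm
  have hleft := tendsto_integral_mul_exp_neg_div_sq
    (continuous_comp_vertical fun s hs => hG s ⟨hs.ge, hs.trans_le hcc⟩)
    (fun T hT => integrable_vertical_mul_gaussian hT.ne' hcc hG hGbound) hlim
  have hright := ((tendsto_integral_mul_gaussian (hk.integrable_mul_exp_neg_sq c w) hgw).comp
    (tendsto_id.atTop_div_const two_pos)).const_mul (2 * Real.pi : ℂ)
  rw [indicator_of_mem (mem_Ioi.2 hw), sub_self, mul_zero, Real.exp_zero, Complex.ofReal_one,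
    mul_one] at hright
  exact tendsto_nhds_unique hleft (hright.congr' <|
    (eventually_gt_atTop 0).mono fun T hT =>
      (integral_vertical_laplace_mul_gaussian_eq hT hcc hG hGbound hk
        fun t => by simp only [G, hFk]).symm)

end GaussianRegularization

section IntegralEquation

variable {ι κ : Type*} [Fintype ι] [Fintype κ] {A a : ι → ℝ} {B b : κ → ℝ} {ρ c : ℝ}

lemma continuousOn_gammaQuotientKernel (hA : ∀ k, 0 < A k) (hB : ∀ j, 0 < B j) :
    ContinuousOn (gammaQuotientKernel A a B b) (Ioi 0) :=
  (continuousOn_digammaSum hB).sub (continuousOn_digammaSum hA)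

lemma exists_abs_gammaQuotientKernel_sub_le (hA : ∀ k, 0 < A k) (hB : ∀ j, 0 < B j)
    (ha : ∀ k, 0 ≤ a k) (hb : ∀ j, 0 ≤ b j) :
    ∃ M, ∀ v, 0 < v → |gammaQuotientKernel A a B b v -
      ((∑ j, b j) - (∑ k, a k) + ((Fintype.card ι : ℝ) - Fintype.card κ) / 2)| ≤ M * v := by
  obtain ⟨MA, hMA⟩ := exists_abs_digammaSum_sub_le hA ha
  obtain ⟨MB, hMB⟩ := exists_abs_digammaSum_sub_le hB hb
  refine ⟨MB + MA, fun v hv => ?_⟩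
  rw [add_mul]
  refine (congrArg abs ?_).le.trans ((abs_sub _ _).trans (add_le_add (hMB v hv) (hMA v hv)))
  rw [gammaQuotientKernel]
  ring

lemma digammaSum_eq (A a : ι → ℝ) (v : ℝ) :
    digammaSum A a v = (∑ k, A k) / v -
      ∑ k, Real.exp (-v) ^ (a k / A k) / (1 - Real.exp (-v) ^ (1 / A k)) := by
  rw [digammaSum, Finset.sum_div, ← Finset.sum_sub_distrib]
  refine Finset.sum_congr rfl fun k _ => ?_
  rw [digammaKernel, one_div_div, ← Real.exp_mul, ← Real.exp_mul, neg_mul, neg_mul,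
    mul_one_div, mul_div_left_comm, mul_comm (a k)]

lemma gammaQuotientKernel_eq (hsum : ∑ k, A k = ∑ j, B j) (v : ℝ) :
    gammaQuotientKernel A a B b v =
      (∑ k, Real.exp (-v) ^ (a k / A k) / (1 - Real.exp (-v) ^ (1 / A k))) -
        ∑ j, Real.exp (-v) ^ (b j / B j) / (1 - Real.exp (-v) ^ (1 / B j)) := by
  rw [gammaQuotientKernel, digammaSum_eq, digammaSum_eq, hsum]
  ring

lemma ofReal_mul_exp_neg_cpow_neg (hρ : 0 ≤ ρ) (w : ℝ) (s : ℂ) :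
    ((ρ * Real.exp (-w) : ℝ) : ℂ) ^ (-s) = (ρ : ℂ) ^ (-s) * Complex.exp (s * w) := by
  rw [Complex.ofReal_mul, Complex.mul_cpow_ofReal_nonneg hρ (Real.exp_pos _).le,
    Complex.cpow_def_of_ne_zero (x := (Real.exp (-w) : ℂ)) (by simp),
    ← Complex.ofReal_log (Real.exp_pos _).le, Real.log_exp]
  push_cast
  ring_nf

lemma const_mul_eq_of_tendsto {k : ℝ → ℂ} {C ℓ : ℂ} {l w : ℝ} (hA : ∀ k, 0 < A k)
    (hB : ∀ j, 0 < B j) (hpos : ∀ k, 0 < A k * c + a k) (hρ : 0 < ρ)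
    (hconv : ∀ s : ℂ, l < s.re → LaplaceConverges k s)
    (hlaplace : ∀ s : ℂ, l < s.re →
      laplace k s = C * (gammaProd A a s / gammaProd B b s * (ρ : ℂ) ^ (-s)))
    (hw : 0 < w) (hkw : ContinuousAt k w)
    (hlim : Tendsto (fun R : ℝ => (((2 * Real.pi)⁻¹ : ℝ) : ℂ) * ∫ t in -R..R,
      gammaProd A a (c + t * Complex.I) / gammaProd B b (c + t * Complex.I) *
        ((ρ * Real.exp (-w) : ℝ) : ℂ) ^ (-(c + t * Complex.I))) atTop (𝓝 ℓ)) :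
    C * ℓ = k w := by
  set c' := max c (l + 1)
  set F : ℂ → ℂ := fun s => C * (gammaProd A a s / gammaProd B b s * (ρ : ℂ) ^ (-s))
  have hre (t : ℝ) : l < (c' + t * Complex.I).re := by
    rw [← Complex.mk_eq_add_mul_I]
    exact (lt_add_one l).trans_le (le_max_right c (l + 1))
  have hF : ∀ s : ℂ, s.re ∈ Icc c c' → DifferentiableAt ℂ F s := fun s hs =>
    (differentiableAt_gammaQuotient (fun k => (hpos k).trans_le
      (by gcongr; exacts [(hA k).le, hs.1])) hρ).const_mul C
  obtain ⟨M, D, hM⟩ := exists_norm_gammaQuotient_le hA hB hpos hρ b c'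
  have hbound : ∀ s : ℂ, s.re ∈ Icc c c' → ‖F s‖ ≤ ‖C‖ * M * Real.exp (D * |s.im|) :=
    fun s hs => by
      rw [norm_mul, mul_assoc]
      exact mul_le_mul_of_nonneg_left (hM s hs) (norm_nonneg C)
  have hpi : (2 * Real.pi : ℂ) ≠ 0 := by simp [Real.pi_ne_zero]
  have heq := eq_of_tendsto_integral_vertical (le_max_left c (l + 1)) hF hbound
    (hconv _ (by simp)) (fun t => (hlaplace _ (hre t)).symm) hw hkw <|
    (hlim.const_mul (2 * Real.pi * C : ℂ)).congr fun R => by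
      simp only [F, ofReal_mul_exp_neg_cpow_neg hρ.le, mul_assoc,
        intervalIntegral.integral_const_mul]
      push_cast
      field_simp
      simp only [mul_comm]
  exact mul_left_cancel₀ hpi (by rw [← mul_assoc, heq])

theorem mul_eq_integral_mul_gammaQuotientKernel {h : ℝ → ℝ} (hA : ∀ k, 0 < A k)
    (hB : ∀ j, 0 < B j) (ha : ∀ k, 0 ≤ a k) (hb : ∀ j, 0 ≤ b j) (hsum : ∑ k, A k = ∑ j, B j)
    (hμ : 0 < (∑ j, b j) - (∑ k, a k) + ((Fintype.card ι : ℝ) - Fintype.card κ) / 2)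
    (hρ : ρ = (∏ k, A k ^ A k) * ∏ j, B j ^ (-B j)) (hpos : ∀ k, 0 < A k * c + a k)
    (hlim : ∀ w, 0 < w → Tendsto (fun R : ℝ => (((2 * Real.pi)⁻¹ : ℝ) : ℂ) * ∫ t in -R..R,
      gammaProd A a (c + t * Complex.I) / gammaProd B b (c + t * Complex.I) *
        ((ρ * Real.exp (-w) : ℝ) : ℂ) ^ (-(c + t * Complex.I))) atTop (𝓝 (h w)))
    {w : ℝ} (hw : 0 < w) :
    w * h w = ∫ v in 0..w, h v * gammaQuotientKernel A a B b (w - v) := by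
  have hρ₀ : 0 < ρ := hρ ▸ prod_rpow_self_mul_pos hA hB
  obtain ⟨M, hM⟩ := exists_abs_gammaQuotientKernel_sub_le hA hB ha hb
  obtain ⟨k, l, K, hl, hk, hkK, ⟨w₀, hw₀, hkw₀⟩, hvolterra⟩ :=
    exists_volterra_solution hμ (continuousOn_gammaQuotientKernel hA hB) hM
  have hk' : ContinuousOn (fun v => (k v : ℂ)) (Ioi 0) :=
    Complex.continuous_ofReal.comp_continuousOn hk
  have hconv : ∀ s : ℂ, l < s.re → LaplaceConverges (fun v => (k v : ℂ)) s := fun s hs =>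
    laplaceConverges_of_norm_le hμ hs (hk'.aestronglyMeasurable measurableSet_Ioi)
      fun v hv => by simpa using hkK v hv
  have hvolterra' (w : ℝ) (hw : 0 < w) :
      (w : ℂ) * k w = ∫ v in 0..w, (k v : ℂ) * (gammaQuotientKernel A a B b (w - v) : ℂ) := by
    rw [← Complex.ofReal_mul, hvolterra w hw, ← intervalIntegral.integral_ofReal]
    simp only [Complex.ofReal_mul]
  obtain ⟨C, hC⟩ :=
    exists_laplace_eq_const_mul_gammaQuotient hA hB ha hb hsum hρ hl hconv hvolterra'
  have hCh (v : ℝ) (hv : 0 < v) : C * h v = k v :=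
    const_mul_eq_of_tendsto (k := fun v => (k v : ℂ)) hA hB hpos hρ₀ hconv hC hv
      (hk'.continuousAt (Ioi_mem_nhds hv)) (hlim v hv)
  have hC₀ : C ≠ 0 := by
    rintro rfl
    exact hkw₀ (by simpa using (hCh w₀ hw₀).symm)
  apply Complex.ofReal_injective
  apply mul_left_cancel₀ hC₀
  rw [Complex.ofReal_mul, mul_left_comm, hCh w hw, hvolterra' w hw,
    ← intervalIntegral.integral_ofReal, ← intervalIntegral.integral_const_mul]
  refine intervalIntegral.integral_congr_ae (Eventually.of_forall fun v hv => ?_)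
  rw [uIoc_of_le hw.le] at hv
  rw [← hCh v hv.1, Complex.ofReal_mul, mul_assoc]

lemma integral_div_self_eq_integral_comp_exp (f : ℝ → ℝ) (a b : ℝ) :
    ∫ u in Real.exp a..Real.exp b, f u / u = ∫ v in a..b, f (Real.exp v) := by
  rw [← intervalIntegral.integral_comp_mul_deriv_of_deriv_nonneg
    Real.continuous_exp.continuousOn (fun v _ => Real.hasDerivAt_exp v)
    fun v _ => (Real.exp_pos v).le]
  simp

lemma integral_comp_div_mul_div_self {x : ℝ} (hρ : 0 < ρ) (hx : 0 < x) (H Q : ℝ → ℝ) :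
    ∫ u in (x / ρ)..1, H (x / u) * Q u / u =
      ∫ v in 0..Real.log (ρ / x),
        H (ρ * Real.exp (-v)) * Q (Real.exp (-(Real.log (ρ / x) - v))) := by
  have hexp : Real.exp (-Real.log (ρ / x)) = x / ρ := by
    rw [Real.exp_neg, Real.exp_log (by positivity), inv_div]
  have hshift := intervalIntegral.integral_comp_sub_right (a := 0) (b := Real.log (ρ / x))
    (fun v => H (x / Real.exp v) * Q (Real.exp v)) (Real.log (ρ / x))
  rw [zero_sub, sub_self] at hshift
  rw [← hexp, ← Real.exp_zero, integral_div_self_eq_integral_comp_exp, ← hshift]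
  refine intervalIntegral.integral_congr fun v _ => ?_
  have harg : x / Real.exp (v - Real.log (ρ / x)) = ρ * Real.exp (-v) := by
    rw [sub_eq_neg_add, Real.exp_add, hexp, Real.exp_neg]
    field_simp
  rw [harg, neg_sub]

end IntegralEquation

theorem stmt17_general {ι κ : Type*} [Fintype ι] [Fintype κ] (A a : ι → ℝ) (B b : κ → ℝ)
    (hA : ∀ k, 0 < A k) (hB : ∀ j, 0 < B j) (ha : ∀ k, 0 ≤ a k) (hb : ∀ j, 0 ≤ b j)
    (hsum : ∑ i, A i = ∑ j, B j)
    (hμ : 0 < (∑ j, b j) - (∑ k, a k) + ((Fintype.card ι : ℝ) - Fintype.card κ) / 2)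
    (ρ : ℝ) (hρ : ρ = (∏ k, A k ^ A k) * ∏ j, B j ^ (-B j))
    (c : ℝ) (hc : ∀ k, -(a k / A k) < c) (H : ℝ → ℝ)
    (hH : ∀ x ∈ Set.Ioo (0 : ℝ) ρ,
      Tendsto (fun R : ℝ => (((2 * Real.pi)⁻¹ : ℝ) : ℂ) *
        ∫ t in -R..R,
          (∏ k, Complex.Gamma ((A k : ℂ) * ((c : ℂ) + (t : ℂ) * Complex.I) + (a k : ℂ))) /
            (∏ j, Complex.Gamma ((B j : ℂ) * ((c : ℂ) + (t : ℂ) * Complex.I) + (b j : ℂ))) *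
            (x : ℂ) ^ (-((c : ℂ) + (t : ℂ) * Complex.I)))
        atTop (nhds ((H x : ℂ))))
    (Q : ℝ → ℝ)
    (hQ : ∀ u ∈ Set.Ioo (0 : ℝ) 1,
      Q u = (∑ i, u ^ (a i / A i) / (1 - u ^ (1 / A i))) -
        ∑ j, u ^ (b j / B j) / (1 - u ^ (1 / B j))) :
    ∀ x ∈ Set.Ioo (0 : ℝ) ρ,
      H x = (1 / Real.log (ρ / x)) * ∫ u in (x / ρ)..1, H (x / u) * Q u / u := by
  rintro x ⟨hx, hxρ⟩
  have hρ₀ : 0 < ρ := hx.trans hxρ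
  set W := Real.log (ρ / x)
  have hW : 0 < W := Real.log_pos ((one_lt_div hx).2 hxρ)
  have hxW : ρ * Real.exp (-W) = x := by
    rw [Real.exp_neg, Real.exp_log (by positivity), inv_div, mul_div_cancel₀ _ hρ₀.ne']
  have hpos (k : ι) : 0 < A k * c + a k := by
    have := (div_lt_iff₀ (hA k)).1 ((neg_div (A k) (a k)).trans_lt (hc k))
    linarith
  have hmem (w : ℝ) (hw : 0 < w) : ρ * Real.exp (-w) ∈ Ioo 0 ρ :=
    ⟨by positivity, mul_lt_of_lt_one_right hρ₀ (Real.exp_lt_one_iff.2 (neg_neg_of_pos hw))⟩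
  have hvolterra : W * H x =
      ∫ v in 0..W, H (ρ * Real.exp (-v)) * gammaQuotientKernel A a B b (W - v) := by
    simpa only [hxW] using mul_eq_integral_mul_gammaQuotientKernel
      (h := fun w => H (ρ * Real.exp (-w))) hA hB ha hb hsum hμ hρ hpos
      (fun w hw => hH _ (hmem w hw)) hW
  have hkernel (v : ℝ) (hv : v ∈ Ioo 0 W) :
      gammaQuotientKernel A a B b (W - v) = Q (Real.exp (-(W - v))) := by
    rw [gammaQuotientKernel_eq hsum,
      hQ _ ⟨Real.exp_pos _, Real.exp_lt_one_iff.2 (by linarith [hv.2])⟩]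
  rw [integral_comp_div_mul_div_self hρ₀ hx, one_div, eq_inv_mul_iff_mul_eq₀ hW.ne', hvolterra]
  exact intervalIntegral.integral_congr_Ioo_of_le hW.le fun v hv => by simp only [hkernel v hv, W]

theorem stmt17 (p q : ℕ) (hp : 1 ≤ p) (hq : 1 ≤ q)
    (A : Fin p → ℝ) (B : Fin q → ℝ) (a : Fin p → ℝ) (b : Fin q → ℝ)
    (hA : ∀ k, 0 < A k) (hB : ∀ j, 0 < B j)
    (ha : ∀ k, 0 ≤ a k) (hb : ∀ j, 0 ≤ b j)
    (hsum : ∑ i, A i = ∑ j, B j)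
    (hμ : 0 < (∑ j, b j) - (∑ k, a k) + ((p : ℝ) - (q : ℝ)) / 2)
    (ρ : ℝ) (hρ : ρ = (∏ k, A k ^ A k) * ∏ j, B j ^ (-B j)) (hρ1 : ρ ≤ 1)
    (γ : ℝ) (hγ : γ = -(⨅ k, a k / A k))
    (c : ℝ) (hc : γ < c)
    (H : ℝ → ℝ)
    (hH : ∀ x ∈ Set.Ioo (0 : ℝ) ρ,
      Tendsto (fun R : ℝ => (((2 * Real.pi)⁻¹ : ℝ) : ℂ) *
        ∫ t in -R..R,
          (∏ k, Complex.Gamma ((A k : ℂ) * ((c : ℂ) + (t : ℂ) * Complex.I) + (a k : ℂ))) /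
            (∏ j, Complex.Gamma ((B j : ℂ) * ((c : ℂ) + (t : ℂ) * Complex.I) + (b j : ℂ))) *
            (x : ℂ) ^ (-((c : ℂ) + (t : ℂ) * Complex.I)))
        atTop (nhds ((H x : ℂ))))
    (Q : ℝ → ℝ)
    (hQ : ∀ u ∈ Set.Ioo (0 : ℝ) 1,
      Q u = (∑ i, u ^ (a i / A i) / (1 - u ^ (1 / A i))) -
        ∑ j, u ^ (b j / B j) / (1 - u ^ (1 / B j))) :
    ∀ x ∈ Set.Ioo (0 : ℝ) ρ,
      H x = (1 / Real.log (ρ / x)) * ∫ u in (x / ρ)..1, H (x / u) * Q u / u :=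
  stmt17_general A a B b hA hB ha hb hsum (by simpa only [Fintype.card_fin] using hμ) ρ hρ c
    (fun k => (neg_le_neg (ciInf_le (Set.finite_range _).bddBelow k)).trans_lt (hγ ▸ hc)) H hH Q hQ
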